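/- arXiv:1707.02580 — 2 statements merged into one kernel-verified Lean document; each statement's English description precedes it below -/
import Mathlib

section
/- Let (g,[p]) be a restricted Lie algebra over k, let X ⊆ Gr_2(g)^{V(g)} be a closed subset, put V_X := ∪_{v ∈ X} v, and let φ : P(V_X) → P^m be a morphism of varieties. Then: (1) the map deg_φ : X → ℕ₀ sending v to the degree deg(φ|_{P(v)}) of the restriction of φ to the projective line P(v) is locally constant; (2) if X is connected, then deg_φ is constant. -/
noncomputable section

namespace ElemAb

variable (p : ℕ) (k : Type) [Field k]

/-- The algebra of polynomial functions on a `k`-vector space `V`: the subalgebra of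
`V → k` generated by the linear functionals. -/
def polyFuns (V : Type) [AddCommGroup V] [Module k V] : Subalgebra k (V → k) :=
  Algebra.adjoin k {f : V → k | ∃ φ : V →ₗ[k] k, f = ⇑φ}

/-- The Zariski topology on a `k`-vector space: the topology generated by the complements of
zero sets of polynomial functions. -/
def zar (V : Type) [AddCommGroup V] [Module k V] : TopologicalSpace V :=
  TopologicalSpace.generateFrom {U | ∃ f ∈ polyFuns k V, U = {x | f x ≠ 0}}

variable (L : Type) [LieRing L] [LieAlgebra k L]

/-- A restricted Lie algebra structure (`p`-map) on the Lie algebra `L`:  a map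
`x ↦ x^[p]` having the formal properties of a `p`-th power map, namely
`(t • x)^[p] = t^p • x^[p]`, additivity on commuting elements (and, in general, additivity up
to a correction term lying in the subalgebra generated by the two elements), and
`ad (x^[p]) = (ad x)^p`. -/
structure pStructure : Type where
  pmap : L → L
  pmap_smul : ∀ (t : k) (x : L), pmap (t • x) = t ^ p • pmap x
  pmap_add_of_comm : ∀ x y : L, ⁅x, y⁆ = 0 → pmap (x + y) = pmap x + pmap y
  pmap_add_mem : ∀ x y : L, pmap (x + y) - pmap x - pmap y ∈ LieSubalgebra.lieSpan k L {x, y}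
  ad_pmap : ∀ x y : L, ⁅pmap x, y⁆ = ((LieAlgebra.ad k L x) ^ p) y

variable {p k L}

/-- The (restricted) nullcone `V(g) = {x | x^[p] = 0}`. -/
def pStructure.null (P : pStructure p k L) : Set L := {x | P.pmap x = 0}

/-- A submodule is an elementary abelian subalgebra if it is abelian (hence a subalgebra) and
the `p`-map vanishes on it. -/
def pStructure.IsElemAbelian (P : pStructure p k L) (e : Submodule k L) : Prop :=
  (∀ x ∈ e, ∀ y ∈ e, ⁅x, y⁆ = (0 : L)) ∧ ∀ x ∈ e, P.pmap x = 0

/-- `E(r, g)`: the `r`-dimensional elementary abelian subalgebras contained in the carrier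
set `g` (take `g = Set.univ` for the whole algebra), as a set of submodules. -/
def pStructure.elemSet (P : pStructure p k L) (g : Set L) (r : ℕ) : Set (Submodule k L) :=
  {e | (e : Set L) ⊆ g ∧ Module.finrank k ↥e = r ∧ P.IsElemAbelian e}

/-- Pairs of linearly independent vectors spanning a member of a given collection `C` of
two-dimensional subspaces. -/
def planePairs (C : Set (Submodule k L)) : Set (L × L) :=
  {z | LinearIndependent k ![z.1, z.2] ∧ Submodule.span k (Set.range ![z.1, z.2]) ∈ C}

/-- The canonical (quotient) map from spanning pairs to planes. -/
def planeMk (C : Set (Submodule k L)) (z : planePairs C) : ↥C :=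
  ⟨Submodule.span k (Set.range ![z.val.1, z.val.2]), z.prop.2⟩

/-- The Zariski topology on a collection of two-dimensional subspaces (e.g. `E(2,g)` or
`Gr₂(g)^{V(g)}`), defined as the quotient topology induced from the Zariski topology on the
variety of spanning pairs. -/
def planeTop (C : Set (Submodule k L)) : TopologicalSpace ↥C :=
  TopologicalSpace.coinduced (planeMk C)
    (TopologicalSpace.induced Subtype.val (zar k (L × L)))

/-- The statement that the projective variety `E(2, g)` is connected (the empty space counts
as connected). -/
def pStructure.EIsConnected (P : pStructure p k L) (g : Set L) : Prop :=
  @IsPreconnected ↥(P.elemSet g 2) (planeTop (P.elemSet g 2)) Set.univ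

/-- `N_i(g) = {x | (ad x)^i = 0}`. -/
def Ncal (i : ℕ) : Set L := {x | (LieAlgebra.ad k L x) ^ i = 0}

/-- The truncated exponential `exp x = ∑_{i<p} (ad x)^i / i!`. -/
def expAd (x : L) : Module.End k L :=
  ∑ i ∈ Finset.range p, (i.factorial : k)⁻¹ • ((LieAlgebra.ad k L x) ^ i)

/-- Automorphisms of the Lie algebra `L` (as linear endomorphisms). -/
def IsLieAut (f : Module.End k L) : Prop :=
  Function.Bijective f ∧ ∀ x y : L, f ⁅x, y⁆ = ⁅f x, f y⁆

/-- Automorphisms of the restricted Lie algebra `(L, [p])`, i.e. automorphisms commuting with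
the `p`-map (the group `Aut_p(g)`). -/
def pStructure.IspAut (P : pStructure p k L) (f : Module.End k L) : Prop :=
  IsLieAut f ∧ ∀ x : L, f (P.pmap x) = P.pmap (f x)

/-- A restricted Lie algebra is admissible if `N₃(g) ⊆ V(g)` and `exp(N₃(g)) ⊆ Aut_p(g)`. -/
def pStructure.IsAdmissible (P : pStructure p k L) : Prop :=
  Ncal (k := k) 3 ⊆ P.null ∧ ∀ x ∈ Ncal (k := k) (L := L) 3, P.IspAut (expAd (p := p) x)


section Proj

variable (k)

/-- The Zariski topology on the projective space `P(V)`, as the quotient topology from the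
punctured affine space. -/
def projTop (V : Type) [AddCommGroup V] [Module k V] : TopologicalSpace (Projectivization k V) :=
  TopologicalSpace.coinduced (Projectivization.mk' k)
    (TopologicalSpace.induced Subtype.val (zar k V))

variable {k}

variable {V : Type} [AddCommGroup V] [Module k V] [FiniteDimensional k V]

/-- Evaluation of a polynomial at the coordinates of `x` with respect to a fixed basis:
this realizes `MvPolynomial (Fin (dim V)) k` as the algebra `S(V^*)` of polynomial functions
on `V`. -/
def polyEval (f : MvPolynomial (Fin (Module.finrank k V)) k) (x : V) : k :=
  MvPolynomial.eval (fun i => (Module.finBasis k V).repr x i) f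

/-- The restriction homomorphism `S(V^*) → S(W^*)` for a subspace `W ⊆ V` (in coordinates). -/
def resW (W : Submodule k V) :
    MvPolynomial (Fin (Module.finrank k V)) k →ₐ[k]
      MvPolynomial (Fin (Module.finrank k ↥W)) k :=
  MvPolynomial.aeval (fun i => ∑ j : Fin (Module.finrank k ↥W),
    MvPolynomial.C ((Module.finBasis k V).repr ((Module.finBasis k ↥W j : ↥W) : V) i) *
      MvPolynomial.X j)

variable (k) in
/-- The subset of `P(V)` determined by a subset `S ⊆ V`, as a type. -/
def projOf (S : Set V) : Type :=
  {q : Projectivization k V // ∃ x, ∃ hx : x ≠ 0, x ∈ S ∧ Projectivization.mk k x hx = q}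

/-- `φ : P(S) → P^m` is a morphism of varieties: locally around every point it is given by a
system of homogeneous polynomials of a common degree. -/
def IsMorphismOn (S : Set V) (m : ℕ)
    (φ : projOf k S → Projectivization k (Fin (m + 1) → k)) : Prop :=
  ∀ q0 : projOf k S, ∃ U : Set (projOf k S),
    @IsOpen _ (TopologicalSpace.induced Subtype.val (projTop k V)) U ∧ q0 ∈ U ∧
    ∃ (d : ℕ) (F : Fin (m + 1) → MvPolynomial (Fin (Module.finrank k V)) k),
      (∀ i, (F i).IsHomogeneous d) ∧
      ∀ (x : V) (hx : x ≠ 0) (q : projOf k S), q ∈ U →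
        q.1 = Projectivization.mk k x hx →
        ∃ hF : (fun i => polyEval (F i) x) ≠ 0,
          φ q = Projectivization.mk k (fun i => polyEval (F i) x) hF

/-- The degree `deg (φ|_{P(v)})` of the restriction of `φ` to the projective line of a
two-dimensional subspace `v`: the common degree of a reduced homogeneous defining system of
`φ|_{P(v)}` in the coordinates of a basis of `v`. -/
noncomputable def planeDeg {S : Set V} (m : ℕ)
    (φ : projOf k S → Projectivization k (Fin (m + 1) → k)) (v : Submodule k V) : ℕ :=
  sSup {d | ∃ u w : V, u ∈ v ∧ w ∈ v ∧ LinearIndependent k ![u, w] ∧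
    ∃ F : Fin (m + 1) → MvPolynomial (Fin 2) k,
      (∀ i, (F i).IsHomogeneous d) ∧
      (∀ h : MvPolynomial (Fin 2) k, (∀ i, h ∣ F i) → IsUnit h) ∧
      ∀ (s t : k) (hx : s • u + t • w ≠ 0) (q : projOf k S),
        q.1 = Projectivization.mk k (s • u + t • w) hx →
        ∃ hF : (fun i => MvPolynomial.eval (![s, t] : Fin 2 → k) (F i)) ≠ 0,
          φ q = Projectivization.mk k (fun i => MvPolynomial.eval (![s, t] : Fin 2 → k) (F i)) hF}

end Proj

/-- `Gr₂(g)^{V(g)}`: the two-dimensional subspaces of `g` contained in the nullcone. -/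
def pStructure.gr2V (P : pStructure p k L) : Set (Submodule k L) :=
  {v | Module.finrank k ↥v = 2 ∧ (v : Set L) ⊆ P.null}

end ElemAb

open ElemAb

/-!
Finitely many tuples of forms of one common degree `D` define `φ` on all of `P(S)`. On the line
spanned by `u` and `w` they restrict to a matrix of binary forms of degree `D` which has rank one
and no common zero, hence is a column `h` times a row `g`, both free of common zeros. Here `g` is a
reduced defining system of the restriction of `φ`, so `deg g` is the degree on the line and
`deg h = D - deg g`. The bound `deg g < n` says that some nonzero row of polynomials of degree less
than `n` is proportional to all rows of the matrix: a homogeneous linear system whose coefficients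
are polynomial in `(u, w)` has a nonzero solution, which is a closed condition. The same holds
for `h` and columns, so the degree and `D` minus the degree both have closed sublevel sets.
-/

namespace ElemAb

open Polynomial

section Proportional

variable {R ι κ : Type*}

/-- Proportionality of two tuples of ring elements, encoded without denominators by the vanishing
of the `2 × 2` minors; over a field the zero tuple is proportional to every tuple. -/
def IsProportional [Mul R] (f g : ι → R) : Prop :=
  ∀ i l, f i * g l = f l * g i

lemma IsProportional.symm [CommMagma R] {f g : ι → R} (h : IsProportional f g) :
    IsProportional g f :=
  fun i l => by rw [mul_comm (g i), mul_comm (g l), h]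

lemma IsProportional.exists_eq_mul [CommSemiring R] {f g : ι → R} (h : IsProportional f g)
    (hg : Ideal.span (Set.range g) = ⊤) : ∃ c, ∀ l, f l = c * g l := by
  obtain ⟨a, ha⟩ :=
    Finsupp.mem_ideal_span_range_iff_exists_finsupp.1 (hg ▸ Submodule.mem_top : (1 : R) ∈ _)
  refine ⟨a.sum fun i r => r * f i, fun l => ?_⟩
  calc f l = f l * a.sum fun i r => r * g i := by rw [ha, mul_one]
    _ = a.sum fun i r => r * (f l * g i) := by
      simp only [Finsupp.mul_sum, mul_left_comm]
    _ = (a.sum fun i r => r * f i) * g l := by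
      simp only [h l, Finsupp.sum_mul, mul_assoc]

variable [CommRing R] [IsDomain R] [IsPrincipalIdealRing R]

lemma exists_eq_mul_and_span_eq_top {f : ι → R} (hf : f ≠ 0) :
    ∃ (q : R) (g : ι → R), q ≠ 0 ∧ Ideal.span (Set.range g) = ⊤ ∧ ∀ l, f l = q * g l := by
  set I := Ideal.span (Set.range f)
  set q := Submodule.IsPrincipal.generator I
  have hdvd (l : ι) : q ∣ f l :=
    (Submodule.IsPrincipal.mem_iff_generator_dvd I).1 (Ideal.subset_span ⟨l, rfl⟩)
  choose g hg using hdvd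
  have hq : q ≠ 0 := fun h => hf (funext fun l => by rw [hg, h, zero_mul]; rfl)
  obtain ⟨a, ha⟩ := Finsupp.mem_ideal_span_range_iff_exists_finsupp.1
    (Submodule.IsPrincipal.generator_mem I)
  refine ⟨q, g, hq, (Ideal.eq_top_iff_one _).2 ?_, hg⟩
  refine Finsupp.mem_ideal_span_range_iff_exists_finsupp.2 ⟨a, mul_left_cancel₀ hq ?_⟩
  calc q * a.sum (fun i r => r * g i) = a.sum fun i r => r * f i := by
        simp only [Finsupp.mul_sum, mul_left_comm q, ← hg]
    _ = q * 1 := by rw [ha, mul_one]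

lemma exists_eq_mul_of_isProportional_rows {A : κ → ι → R}
    (hA : ∀ j j', IsProportional (A j) (A j')) :
    ∃ (h : κ → R) (g : ι → R), ∀ j l, A j l = h j * g l := by
  by_cases hA0 : A = 0
  · exact ⟨0, 0, by simp [hA0]⟩
  obtain ⟨j₀, hj₀⟩ := Function.ne_iff.1 hA0
  obtain ⟨q, g, hq, hg, hqg⟩ := exists_eq_mul_and_span_eq_top hj₀
  have hAg (j : κ) : IsProportional (A j) g := fun i l => mul_left_cancel₀ hq <| by
    simpa only [hqg, mul_left_comm q] using hA j j₀ i l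
  choose h hh using fun j => (hAg j).exists_eq_mul hg
  exact ⟨h, g, hh⟩

end Proportional

section LineRestriction

variable {R σ : Type*} [CommRing R] {F : MvPolynomial σ R} {d : ℕ}

lemma eval_smul_of_isHomogeneous (hF : F.IsHomogeneous d) (c : R) (x : σ → R) :
    MvPolynomial.eval (c • x) F = c ^ d * MvPolynomial.eval x F := by
  simp only [MvPolynomial.eval_eq, Finset.mul_sum]
  refine Finset.sum_congr rfl fun δ hδ => ?_
  have hdeg : ∑ i ∈ δ.support, δ i = d := by
    simpa [Finsupp.degree_apply] using (hF.degree_eq_sum_deg_support hδ).symm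
  simp only [Pi.smul_apply, smul_eq_mul, mul_pow, Finset.prod_mul_distrib,
    Finset.prod_pow_eq_pow_sum, hdeg]
  ring

lemma eval_homogenize_one_zero (f : R[X]) (d : ℕ) :
    MvPolynomial.eval ![1, 0] (f.homogenize d) = f.coeff d := by
  rw [homogenize, map_sum, Finset.sum_eq_single (d, 0)]
  · simp [MvPolynomial.eval_monomial, Finsupp.prod_fintype, Finsupp.update_eq_add_single]
  · rintro ⟨a, b⟩ hab hne
    have hb : b ≠ 0 := by
      rintro rfl
      simp_all
    simp [MvPolynomial.eval_monomial, Finsupp.prod_fintype, Finsupp.update_eq_add_single, hb]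
  · simp

lemma eval_homogenize_right_one {f : R[X]} (hf : f.natDegree ≤ d) (s : R) :
    MvPolynomial.eval ![s, 1] (f.homogenize d) = f.eval s :=
  eval₂_homogenize_of_eq_one hf (RingHom.id R) ![s, 1] rfl

/-- The restriction of `F` to the line through `a` and `b`, in the affine coordinate `s` of the
point `s • a + b`. If `F` is a form of degree `d`, homogenizing in degree `d` recovers the
restriction to the plane spanned by `a` and `b`. -/
def lineRestrict (a b : σ → R) (F : MvPolynomial σ R) : R[X] :=
  MvPolynomial.aeval (fun i => C (a i) * X + C (b i)) F

lemma natDegree_lineRestrict_le (hF : F.IsHomogeneous d) (a b : σ → R) :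
    (lineRestrict a b F).natDegree ≤ d := by
  simpa only [lineRestrict, mul_one] using
    MvPolynomial.aeval_natDegree_le F hF.totalDegree_le _ fun _ => natDegree_linear_le

lemma eval_homogenize_lineRestrict (hF : F.IsHomogeneous d) (a b : σ → R) (s t : R) :
    MvPolynomial.eval ![s, t] ((lineRestrict a b F).homogenize d) =
      MvPolynomial.eval (s • a + t • b) F := by
  set ℓ : σ → MvPolynomial (Fin 2) R := fun i =>
    MvPolynomial.C (a i) * MvPolynomial.X 0 + MvPolynomial.C (b i) * MvPolynomial.X 1
  have hℓ : (MvPolynomial.aeval ℓ F).IsHomogeneous d := by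
    simpa only [one_mul] using hF.aeval ℓ fun i =>
      (MvPolynomial.isHomogeneous_C_mul_X (a i) (0 : Fin 2)).add
        (MvPolynomial.isHomogeneous_C_mul_X (b i) 1)
  have hdehom : MvPolynomial.aeval ![X, 1] (MvPolynomial.aeval ℓ F) = lineRestrict a b F := by
    rw [MvPolynomial.comp_aeval_apply]
    simp [lineRestrict, ℓ]
  rw [homogenize_eq_of_isHomogeneous hℓ hdehom, ← MvPolynomial.aeval_eq_eval,
    MvPolynomial.comp_aeval_apply]
  exact congrArg (MvPolynomial.eval · F) (funext fun i => by simp [ℓ, mul_comm])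

lemma eval_lineRestrict (a b : σ → R) (F : MvPolynomial σ R) (s : R) :
    (lineRestrict a b F).eval s = MvPolynomial.eval (s • a + b) F := by
  rw [lineRestrict, ← coe_aeval_eq_eval, MvPolynomial.comp_aeval_apply]
  exact congrArg (MvPolynomial.eval · F) (funext fun i => by simp [mul_comm (a i) s])

end LineRestriction

section BasePointFree

variable {K ι κ : Type*} [Field K] {d e n : ℕ}

/-- A tuple of polynomials of degree at most `d`, viewed as binary forms of degree `d`, has no
common zero on the projective line. -/
structure IsBasePointFree (d : ℕ) (f : ι → K[X]) : Prop where
  natDegree_le (i : ι) : (f i).natDegree ≤ d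
  exists_ne_zero (s t : K) (hst : s ≠ 0 ∨ t ≠ 0) :
    ∃ i, MvPolynomial.eval ![s, t] ((f i).homogenize d) ≠ 0

namespace IsBasePointFree

variable {f g : ι → K[X]}

lemma exists_coeff_ne_zero (hf : IsBasePointFree d f) : ∃ i, (f i).coeff d ≠ 0 := by
  simpa only [eval_homogenize_one_zero] using hf.exists_ne_zero 1 0 (.inl one_ne_zero)

lemma exists_eval_ne_zero (hf : IsBasePointFree d f) (t : K) : ∃ i, (f i).eval t ≠ 0 := by
  obtain ⟨i, hi⟩ := hf.exists_ne_zero t 1 (.inr one_ne_zero)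
  exact ⟨i, eval_homogenize_right_one (hf.natDegree_le i) t ▸ hi⟩

lemma ne_zero (hf : IsBasePointFree d f) : f ≠ 0 := by
  rintro rfl
  simpa using hf.exists_coeff_ne_zero

lemma mem_degreeLT (hf : IsBasePointFree d f) (hn : d < n) (i : ι) : f i ∈ degreeLT K n :=
  Polynomial.mem_degreeLT.2 <| (degree_le_of_natDegree_le (hf.natDegree_le i)).trans_lt
    (by exact_mod_cast hn)

lemma span_range_eq_top [IsAlgClosed K] (hf : IsBasePointFree d f) :
    Ideal.span (Set.range f) = ⊤ := by
  set I := Ideal.span (Set.range f)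
  by_contra hI
  have hdeg : (Submodule.IsPrincipal.generator I).degree ≠ 0 := fun h =>
    hI (Ideal.eq_top_of_isUnit_mem I (Submodule.IsPrincipal.generator_mem I)
      (isUnit_iff_degree_eq_zero.2 h))
  obtain ⟨t, ht⟩ := IsAlgClosed.exists_root _ hdeg
  obtain ⟨i, hi⟩ := hf.exists_eval_ne_zero t
  exact hi <| eval_eq_zero_of_dvd_of_eval_eq_zero
    ((Submodule.IsPrincipal.mem_iff_generator_dvd I).1 (Ideal.subset_span ⟨i, rfl⟩)) ht

lemma lt_of_isProportional [IsAlgClosed K] (hg : IsBasePointFree e g) (hf : f ≠ 0)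
    (hdeg : ∀ i, f i ∈ degreeLT K n) (hfg : IsProportional f g) : e < n := by
  obtain ⟨c, hc⟩ := hfg.exists_eq_mul hg.span_range_eq_top
  have hc0 : c ≠ 0 := fun h => hf (funext fun l => by rw [hc, h, zero_mul]; rfl)
  obtain ⟨l, hl⟩ := hg.exists_coeff_ne_zero
  have hle : (e : WithBot ℕ) ≤ (f l).degree := by
    rw [hc l, mul_comm]
    exact (le_degree_of_ne_zero hl).trans (degree_le_mul_left _ hc0)
  exact_mod_cast hle.trans_lt (Polynomial.mem_degreeLT.1 (hdeg l))

lemma degree_unique [IsAlgClosed K] (hf : IsBasePointFree d f) (hg : IsBasePointFree e g)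
    (h : IsProportional f g) : d = e :=
  le_antisymm
    (Nat.lt_succ_iff.1 <|
      hf.lt_of_isProportional hg.ne_zero (hg.mem_degreeLT e.lt_succ_self) h.symm)
    (Nat.lt_succ_iff.1 <| hg.lt_of_isProportional hf.ne_zero (hf.mem_degreeLT d.lt_succ_self) h)

lemma exists_factor_degrees {h : κ → K[X]}
    (hhg : IsBasePointFree d fun x : κ × ι => h x.1 * g x.2) :
    ∃ e' e, e' + e = d ∧ IsBasePointFree e' h ∧ IsBasePointFree e g := by
  obtain ⟨⟨j₀, l₀⟩, h₀⟩ := hhg.exists_coeff_ne_zero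
  have hmul : h j₀ * g l₀ ≠ 0 := fun hz => h₀ (by simp only [hz, coeff_zero])
  have hh₀ := left_ne_zero_of_mul hmul
  have hg₀ := right_ne_zero_of_mul hmul
  have hd : (h j₀).natDegree + (g l₀).natDegree = d := by
    rw [← natDegree_mul hh₀ hg₀]
    exact (hhg.natDegree_le (j₀, l₀)).antisymm (le_natDegree_of_ne_zero h₀)
  have hh (j : κ) : (h j).natDegree ≤ (h j₀).natDegree := by
    rcases eq_or_ne (h j) 0 with hz | hz
    · simp [hz]
    · have := natDegree_mul hz hg₀ ▸ hhg.natDegree_le (j, l₀)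
      omega
  have hg (l : ι) : (g l).natDegree ≤ (g l₀).natDegree := by
    rcases eq_or_ne (g l) 0 with hz | hz
    · simp [hz]
    · have := natDegree_mul hh₀ hz ▸ hhg.natDegree_le (j₀, l)
      omega
  have hne (s t : K) (hst : s ≠ 0 ∨ t ≠ 0) :
      ∃ j l, MvPolynomial.eval ![s, t] ((h j).homogenize (h j₀).natDegree) ≠ 0 ∧
        MvPolynomial.eval ![s, t] ((g l).homogenize (g l₀).natDegree) ≠ 0 := by
    obtain ⟨⟨j, l⟩, hjl⟩ := hhg.exists_ne_zero s t hst
    rw [← hd, homogenize_mul _ _ (hh j) (hg l), map_mul] at hjl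
    exact ⟨j, l, left_ne_zero_of_mul hjl, right_ne_zero_of_mul hjl⟩
  refine ⟨_, _, hd, ⟨hh, fun s t hst => ?_⟩, ⟨hg, fun s t hst => ?_⟩⟩
  · obtain ⟨j, -, hj, -⟩ := hne s t hst
    exact ⟨j, hj⟩
  · obtain ⟨-, l, -, hl⟩ := hne s t hst
    exact ⟨l, hl⟩

end IsBasePointFree

/-- A nonzero tuple of polynomials of degree less than `n` is proportional to every row of every
matrix of the family `N`, whose second argument is the affine coordinate on the line. -/
def HasRowDirectionOfDegreeLT (n : ℕ) (N : κ → K → ι → K) : Prop :=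
  ∃ f : ι → K[X], f ≠ 0 ∧ (∀ l, f l ∈ degreeLT K n) ∧
    ∀ j s, IsProportional (fun l => (f l).eval s) (N j s)

lemma IsBasePointFree.lt_iff_hasRowDirectionOfDegreeLT [IsAlgClosed K] {g : ι → K[X]}
    (hg : IsBasePointFree e g) {h : κ → K[X]} (hh : h ≠ 0) {N : κ → K → ι → K}
    (hN : ∀ j s l, N j s l = (h j).eval s * (g l).eval s) :
    e < n ↔ HasRowDirectionOfDegreeLT n N := by
  constructor
  · refine fun hn => ⟨g, hg.ne_zero, hg.mem_degreeLT hn, fun j s i l => ?_⟩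
    rw [hN, hN]
    ring
  · rintro ⟨f, hf₀, hfn, hf⟩
    obtain ⟨j, hj⟩ := Function.ne_iff.1 hh
    refine hg.lt_of_isProportional hf₀ hfn fun i l =>
      mul_left_cancel₀ hj (Polynomial.funext fun s => ?_)
    have hs := hf j s i l
    simp only [hN] at hs
    simp only [eval_mul]
    linear_combination hs

lemma isUnit_of_forall_eval_ne_zero {σ : Type*} [Nontrivial σ] [IsAlgClosed K]
    {h : MvPolynomial σ K} (hh : ∀ x ≠ 0, MvPolynomial.eval x h ≠ 0) : IsUnit h := by
  classical
  obtain ⟨i, j, hij⟩ := exists_pair_ne σ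
  set y : σ → K := Pi.single j 1
  have hy : y ≠ 0 := by simp [y]
  -- The line through `x` and `y` avoids the origin, so `h` restricts to a polynomial without roots.
  have hconst (x : σ → K) (hx : x i ≠ 0) : MvPolynomial.eval x h = MvPolynomial.eval y h := by
    have hroot (s : K) : (lineRestrict (x - y) y h).eval s ≠ 0 := by
      rw [eval_lineRestrict]
      refine hh _ fun hz => ?_
      have hs : s = 0 := by simpa [y, hij, hx] using congrFun hz i
      exact hy (by simpa [hs] using hz)
    obtain ⟨c, hc⟩ := natDegree_eq_zero.1 (natDegree_eq_zero_iff_degree_le_zero.2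
      (le_of_eq <| by_contra fun hdeg => (IsAlgClosed.exists_root _ hdeg).elim hroot))
    have h0 := eval_lineRestrict (x - y) y h 0
    have h1 := eval_lineRestrict (x - y) y h 1
    simp only [← hc, eval_C, zero_smul, zero_add, one_smul, sub_add_cancel] at h0 h1
    rw [← h0, ← h1]
  have hzero : (h - MvPolynomial.C (MvPolynomial.eval y h)) * MvPolynomial.X i = 0 := by
    refine MvPolynomial.funext fun x => ?_
    by_cases hx : x i = 0
    · simp [hx]
    · simp [hconst x hx]
  rw [sub_eq_zero.1 ((mul_eq_zero.1 hzero).resolve_right (MvPolynomial.X_ne_zero i))]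
  exact (isUnit_iff_ne_zero.2 (hh y hy)).map MvPolynomial.C

end BasePointFree

section LinearSystem

variable {K W κ : Type*} [Field K] [AddCommGroup W] [Module K W]

lemma exists_fun_fin_finrank_forall_eq_zero [FiniteDimensional K W] {B : κ → Module.Dual K W}
    (hB : ∀ w, (∀ r, B r w = 0) → w = 0) :
    ∃ ρ : Fin (Module.finrank K W) → κ, ∀ w, (∀ i, B (ρ i) w = 0) → w = 0 := by
  have hcoann (s : Set (Module.Dual K W)) (w : W) :
      w ∈ (Submodule.span K s).dualCoannihilator ↔ ∀ f ∈ s, f w = 0 :=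
    Set.ext_iff.1 (Submodule.coe_dualCoannihilator_span s) w
  have hbot : (Submodule.span K (Set.range B)).dualCoannihilator = ⊥ :=
    (Submodule.eq_bot_iff _).2 fun w hw => hB w fun r => (hcoann _ w).1 hw _ ⟨r, rfl⟩
  have hrank : Module.finrank K (Submodule.span K (Set.range B)) = Module.finrank K W := by
    rw [← Subspace.finrank_add_finrank_dualCoannihilator_eq (Submodule.span K (Set.range B)),
      hbot, finrank_bot, add_zero]
  obtain ⟨f, hf, hspan, -⟩ := Submodule.exists_fun_fin_finrank_span_eq K (Set.range B)
  choose ρ hρ using hf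
  refine ⟨fun i => ρ (Fin.cast hrank.symm i), fun w hw => ?_⟩
  rw [← Submodule.mem_bot K, ← hbot, ← hspan, hcoann, Set.forall_mem_range]
  exact fun i => hρ i ▸ hw (Fin.cast hrank i)

lemma exists_ne_zero_forall_eq_zero_iff_det {ι : Type*} [Fintype ι] [DecidableEq ι]
    (b : Module.Basis ι K W) (B : ι → Module.Dual K W) :
    (∃ w ≠ 0, ∀ i, B i w = 0) ↔ (Matrix.of fun i j => B i (b j)).det = 0 := by
  have hmul (w : W) (i : ι) :
      (Matrix.of fun i j => B i (b j)).mulVec (b.equivFun w) i = B i w := by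
    conv_rhs => rw [← b.sum_equivFun w]
    simp only [Matrix.mulVec, dotProduct, Matrix.of_apply, map_sum, map_smul, smul_eq_mul,
      mul_comm]
  rw [← Matrix.exists_mulVec_eq_zero_iff]
  constructor
  · rintro ⟨w, hw, hBw⟩
    exact ⟨b.equivFun w, by simpa using hw, funext fun i => (hmul w i).trans (hBw i)⟩
  · rintro ⟨x, hx, hBx⟩
    refine ⟨b.equivFun.symm x, b.equivFun.symm.map_ne_zero_iff.2 hx, fun i => ?_⟩
    rw [← hmul, LinearEquiv.apply_symm_apply, hBx, Pi.zero_apply]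

end LinearSystem

section Zariski

open scoped Topology

variable {K V W ι κ : Type} [Field K] [AddCommGroup V] [Module K V] [AddCommGroup W] [Module K W]

lemma comp_mem_polyFuns {f : W → K} (hf : f ∈ polyFuns K W) (g : V →ₗ[K] W) :
    f ∘ g ∈ polyFuns K V := by
  induction hf using Algebra.adjoin_induction with
  | mem f hf =>
    obtain ⟨ψ, rfl⟩ := hf
    exact Algebra.subset_adjoin ⟨ψ ∘ₗ g, rfl⟩
  | algebraMap r => exact Subalgebra.algebraMap_mem _ r
  | add _ _ _ _ hf hg => exact add_mem hf hg
  | mul _ _ _ _ hf hg => exact mul_mem hf hg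

lemma isOpen_zar_ne_zero {f : V → K} (hf : f ∈ polyFuns K V) : IsOpen[zar K V] {x | f x ≠ 0} :=
  TopologicalSpace.isOpen_generateFrom_of_mem ⟨f, hf, rfl⟩

lemma continuous_zar (g : V →ₗ[K] W) : Continuous[zar K V, zar K W] g := by
  refine continuous_generateFrom_iff.2 ?_
  rintro _ ⟨f, hf, rfl⟩
  exact isOpen_zar_ne_zero (comp_mem_polyFuns hf g)

lemma det_mem_polyFuns [Fintype ι] [DecidableEq ι] {A : V → Matrix ι ι K}
    (hA : ∀ i j, (fun z => A z i j) ∈ polyFuns K V) : (fun z => (A z).det) ∈ polyFuns K V := by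
  have hdet : (fun z => (A z).det) =
      ∑ σ : Equiv.Perm ι, Equiv.Perm.sign σ • ∏ i, fun z => A z (σ i) i := by
    ext z
    simp [Matrix.det_apply]
  rw [hdet]
  exact sum_mem fun σ _ => zsmul_mem (prod_mem fun i _ => hA _ _) _

lemma isClosed_exists_ne_zero_forall_eq_zero [FiniteDimensional K W]
    {A : V → κ → Module.Dual K W} (hA : ∀ r w, (fun z => A z r w) ∈ polyFuns K V) :
    IsClosed[zar K V] {z | ∃ w ≠ 0, ∀ r, A z r w = 0} := by
  let _ := zar K V
  rw [← isOpen_compl_iff, isOpen_iff_forall_mem_open]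
  intro z₀ hz₀
  obtain ⟨ρ, hρ⟩ := exists_fun_fin_finrank_forall_eq_zero (B := A z₀) fun w hw =>
    by_contra fun hw₀ => hz₀ ⟨w, hw₀, hw⟩
  set b := Module.finBasis K W
  refine ⟨{z | (Matrix.of fun i j => A z (ρ i) (b j)).det ≠ 0}, ?_,
    isOpen_zar_ne_zero (det_mem_polyFuns fun i j => hA _ _), ?_⟩
  · rintro z hz ⟨w, hw, hAw⟩
    exact hz ((exists_ne_zero_forall_eq_zero_iff_det b _).1 ⟨w, hw, fun i => hAw _⟩)
  · intro hdet
    obtain ⟨w, hw, hAw⟩ := (exists_ne_zero_forall_eq_zero_iff_det b _).2 hdet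
    exact hw (hρ w hAw)

lemma isClosed_hasRowDirectionOfDegreeLT [Finite ι] {N : V → κ → K → ι → K}
    (hN : ∀ j s l, (fun z => N z j s l) ∈ polyFuns K V) (n : ℕ) :
    IsClosed[zar K V] {z | HasRowDirectionOfDegreeLT n (N z)} := by
  have : FiniteDimensional K (degreeLT K n) := Module.Finite.equiv (degreeLTEquiv K n).symm
  let value (s : K) (i : ι) : Module.Dual K (ι → degreeLT K n) :=
    leval s ∘ₗ (degreeLT K n).subtype ∘ₗ LinearMap.proj i
  let minor (z : V) : κ × K × ι × ι → Module.Dual K (ι → degreeLT K n) := fun ⟨j, s, i, l⟩ =>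
    N z j s l • value s i - N z j s i • value s l
  convert isClosed_exists_ne_zero_forall_eq_zero (A := minor) fun ⟨j, s, i, l⟩ f =>
    sub_mem (mul_mem (hN j s l) (Subalgebra.algebraMap_mem _ (value s i f)))
      (mul_mem (hN j s i) (Subalgebra.algebraMap_mem _ (value s l f))) using 1
  ext z
  have hminor (j : κ) (s : K) (i l : ι) (f : ι → degreeLT K n) :
      minor z (j, s, i, l) f = 0 ↔
        (f i : K[X]).eval s * N z j s l = (f l : K[X]).eval s * N z j s i := by
    simp [minor, value, sub_eq_zero, mul_comm]
  constructor
  · rintro ⟨f, hf₀, hfn, hf⟩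
    refine ⟨fun l => ⟨f l, hfn l⟩, fun h => hf₀ (funext fun l => ?_), fun ⟨j, s, i, l⟩ => ?_⟩
    · exact congrArg Subtype.val (congrFun h l)
    · exact (hminor j s i l _).2 (hf j s i l)
  · rintro ⟨f, hf₀, hf⟩
    refine ⟨fun l => f l, fun h => hf₀ (funext fun l => Subtype.ext (congrFun h l)),
      fun l => (f l).2, fun j s i l => (hminor j s i l f).1 (hf (j, s, i, l))⟩

variable [FiniteDimensional K V]

lemma mem_polyFuns_iff {f : V → K} : f ∈ polyFuns K V ↔ ∃ F, polyEval F = f := by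
  set b := Module.finBasis K V
  have hadjoin : polyFuns K V = Algebra.adjoin K (Set.range fun i => ⇑(b.coord i)) := by
    refine le_antisymm (Algebra.adjoin_le ?_) (Algebra.adjoin_mono ?_)
    · rintro _ ⟨ψ, rfl⟩
      have hψ : ⇑ψ = ∑ i, ψ (b i) • ⇑(b.coord i) := funext fun x => by
        conv_lhs => rw [← b.sum_repr x]
        simp only [map_sum, map_smul, Finset.sum_apply, Pi.smul_apply, b.coord_apply, smul_eq_mul,
          mul_comm]
      rw [hψ]
      exact sum_mem fun i _ =>
        Subalgebra.smul_mem _ (Algebra.subset_adjoin (Set.mem_range_self i)) _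
    · rintro _ ⟨i, rfl⟩
      exact ⟨b.coord i, rfl⟩
  have haeval (F : MvPolynomial (Fin (Module.finrank K V)) K) :
      MvPolynomial.aeval (fun i => ⇑(b.coord i)) F = polyEval F := funext fun x =>
    MvPolynomial.comp_aeval_apply _ (Pi.evalAlgHom K (fun _ => K) x) F
  rw [hadjoin, Algebra.adjoin_range_eq_range_aeval, AlgHom.mem_range]
  simp only [haeval]

lemma polyEval_smul {F : MvPolynomial (Fin (Module.finrank K V)) K} {d : ℕ}
    (hF : F.IsHomogeneous d) (c : K) (x : V) :
    polyEval F (c • x) = c ^ d * polyEval F x := by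
  simp only [polyEval, ← eval_smul_of_isHomogeneous hF, map_smul]
  rfl

lemma polyEval_mul (F G : MvPolynomial (Fin (Module.finrank K V)) K) (x : V) :
    polyEval (F * G) x = polyEval F x * polyEval G x :=
  map_mul _ F G

lemma polyEval_smul_fst_add_snd_mem_polyFuns (F : MvPolynomial (Fin (Module.finrank K V)) K)
    (s : K) : (fun z : V × V => polyEval F (s • z.1 + z.2)) ∈ polyFuns K (V × V) :=
  comp_mem_polyFuns (mem_polyFuns_iff.2 ⟨F, rfl⟩)
    (s • LinearMap.fst K V V + LinearMap.snd K V V)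

lemma exists_polyEval_ne_zero_subset_of_isOpen {O : Set V} (hO : IsOpen[zar K V] O) {x : V}
    (hx : x ∈ O) : ∃ F : MvPolynomial (Fin (Module.finrank K V)) K,
      polyEval F x ≠ 0 ∧ {y | polyEval F y ≠ 0} ⊆ O := by
  induction hO with
  | basic U hU =>
    obtain ⟨f, hf, rfl⟩ := hU
    obtain ⟨F, rfl⟩ := mem_polyFuns_iff.1 hf
    exact ⟨F, hx, subset_rfl⟩
  | univ => exact ⟨1, by simp [polyEval], Set.subset_univ _⟩
  | inter U U' _ _ hU hU' =>
    obtain ⟨F, hFx, hF⟩ := hU hx.1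
    obtain ⟨G, hGx, hG⟩ := hU' hx.2
    refine ⟨F * G, polyEval_mul F G x ▸ mul_ne_zero hFx hGx, fun y hy => ?_⟩
    have hFG : polyEval F y * polyEval G y ≠ 0 := polyEval_mul F G y ▸ hy
    exact ⟨hF (left_ne_zero_of_mul hFG), hG (right_ne_zero_of_mul hFG)⟩
  | sUnion 𝒰 _ h𝒰 =>
    obtain ⟨U, hU, hxU⟩ := hx
    obtain ⟨F, hFx, hF⟩ := h𝒰 U hU hxU
    exact ⟨F, hFx, hF.trans (Set.subset_sUnion_of_mem hU)⟩

variable [Infinite K]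

lemma polyEval_homogeneousComponent_eq_zero {F : MvPolynomial (Fin (Module.finrank K V)) K}
    {y : V} (hF : ∀ c : K, c ≠ 0 → polyEval F (c • y) = 0) (i : ℕ) :
    polyEval (F.homogeneousComponent i) y = 0 := by
  set N := Finset.range (F.totalDegree + 1)
  set q : K[X] := ∑ i ∈ N, monomial i (polyEval (F.homogeneousComponent i) y)
  have heval (c : K) : q.eval c = polyEval F (c • y) := by
    conv_rhs => rw [← F.sum_homogeneousComponent, polyEval, map_sum]
    simp only [q, eval_finsetSum, eval_monomial]
    refine Finset.sum_congr rfl fun i _ => ?_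
    rw [mul_comm]
    exact (polyEval_smul (F.homogeneousComponent_isHomogeneous i) c y).symm
  have hXq : X * q = 0 := Polynomial.funext fun c => by
    rcases eq_or_ne c 0 with rfl | hc
    · simp
    · simp [heval, hF c hc]
  have hq : q = 0 := (mul_eq_zero.1 hXq).resolve_left X_ne_zero
  by_cases hi : i ∈ N
  · simpa [q, finsetSum_coeff, coeff_monomial, hi] using congrArg (coeff · i) hq
  · rw [MvPolynomial.homogeneousComponent_eq_zero i F (by simpa [N] using hi)]
    simp [polyEval]

lemma exists_isHomogeneous_subset_of_isOpen {O : Set (Projectivization K V)}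
    (hO : IsOpen[projTop K V] O) {x : V} (hx : x ≠ 0) (hxO : Projectivization.mk K x hx ∈ O) :
    ∃ (d : ℕ) (F : MvPolynomial (Fin (Module.finrank K V)) K), F.IsHomogeneous d ∧
      polyEval F x ≠ 0 ∧ ∀ (y : V) (hy : y ≠ 0), polyEval F y ≠ 0 →
        Projectivization.mk K y hy ∈ O := by
  obtain ⟨O', hO', hpre⟩ := hO
  have hmem (y : V) (hy : y ≠ 0) : y ∈ O' ↔ Projectivization.mk K y hy ∈ O :=
    Set.ext_iff.1 hpre ⟨y, hy⟩
  obtain ⟨F, hFx, hF⟩ := exists_polyEval_ne_zero_subset_of_isOpen hO' ((hmem x hx).2 hxO)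
  obtain ⟨i, hi⟩ : ∃ i, polyEval (F.homogeneousComponent i) x ≠ 0 := by
    by_contra! h
    refine hFx ?_
    rw [← F.sum_homogeneousComponent, polyEval, map_sum]
    exact Finset.sum_eq_zero fun i _ => h i
  refine ⟨i, _, F.homogeneousComponent_isHomogeneous i, hi, fun y hy hne => ?_⟩
  obtain ⟨c, hc, hcy⟩ : ∃ c : K, c ≠ 0 ∧ polyEval F (c • y) ≠ 0 := by
    by_contra! h
    exact hne (polyEval_homogeneousComponent_eq_zero h i)
  rw [← (Projectivization.mk_eq_mk_iff' K _ _ (smul_ne_zero hc hy) hy).2 ⟨c, rfl⟩, ← hmem]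
  exact hF hcy

end Zariski

section GlobalSystem

variable {K V J : Type} [Field K] [AddCommGroup V] [Module K V] [FiniteDimensional K V]
  {S : Set V} {m d e D : ℕ} {φ : projOf K S → Projectivization K (Fin (m + 1) → K)}
  {F : Fin (m + 1) → MvPolynomial (Fin (Module.finrank K V)) K}
  {M : J → Fin (m + 1) → MvPolynomial (Fin (Module.finrank K V)) K}

lemma isProportional_of_mk_eq_mk {ι : Type*} {a b : ι → K} {ha : a ≠ 0} {hb : b ≠ 0}
    (h : Projectivization.mk K a ha = Projectivization.mk K b hb) : IsProportional a b := by
  obtain ⟨c, rfl⟩ := (Projectivization.mk_eq_mk_iff' K _ _ ha hb).1 h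
  intro i l
  simp only [Pi.smul_apply, smul_eq_mul]
  ring

variable (φ) in
/-- A tuple of forms of degree `d` that defines `φ` at every point of `P(S)` where it does not
vanish. -/
structure Represents (d : ℕ) (F : Fin (m + 1) → MvPolynomial (Fin (Module.finrank K V)) K) :
    Prop where
  isHomogeneous (i : Fin (m + 1)) : (F i).IsHomogeneous d
  apply_eq (x : V) (hx : x ≠ 0) (q : projOf K S) (hq : q.1 = Projectivization.mk K x hx)
    (hF : (fun i => polyEval (F i) x) ≠ 0) :
    φ q = Projectivization.mk K (fun i => polyEval (F i) x) hF

lemma Represents.mul (hF : Represents φ d F) {f : MvPolynomial (Fin (Module.finrank K V)) K}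
    (hf : f.IsHomogeneous e) : Represents φ (e + d) fun i => f * F i := by
  refine ⟨fun i => hf.mul (hF.isHomogeneous i), fun x hx q hq hne => ?_⟩
  have hmul : polyEval f x • (fun i => polyEval (F i) x) = fun i => polyEval (f * F i) x :=
    funext fun i => (polyEval_mul f (F i) x).symm
  rw [hF.apply_eq x hx q hq (right_ne_zero_of_smul (hmul ▸ hne))]
  exact ((Projectivization.mk_eq_mk_iff' K _ _ _ _).2 ⟨_, hmul⟩).symm

lemma IsMorphismOn.exists_represents [Infinite K] (hφ : IsMorphismOn S m φ) {x : V} (hx : x ≠ 0)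
    {q : projOf K S} (hq : q.1 = Projectivization.mk K x hx) :
    ∃ d F, Represents φ d F ∧ ∃ i, polyEval (F i) x ≠ 0 := by
  obtain ⟨U, ⟨O, hO, rfl⟩, hqU, d, F, hF, hrep⟩ := hφ q
  obtain ⟨e, f, hf, hfx, hfO⟩ := exists_isHomogeneous_subset_of_isOpen hO hx (hq ▸ hqU)
  refine ⟨e + d, fun i => f * F i, ⟨fun i => hf.mul (hF i), fun y hy r hr hne => ?_⟩, ?_⟩
  · have hmul : polyEval f y • (fun i => polyEval (F i) y) = fun i => polyEval (f * F i) y :=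
      funext fun i => (polyEval_mul f (F i) y).symm
    have hrO : r.1 ∈ O := hr ▸ hfO y hy (left_ne_zero_of_smul (hmul ▸ hne))
    obtain ⟨hFy, hφr⟩ := hrep y hy r hrO hr
    exact hφr.trans ((Projectivization.mk_eq_mk_iff' K _ _ _ _).2 ⟨_, hmul⟩).symm
  · obtain ⟨hFx, -⟩ := hrep x hx q hqU hq
    obtain ⟨i, hi⟩ := Function.ne_iff.1 hFx
    exact ⟨i, polyEval_mul f (F i) x ▸ mul_ne_zero hfx hi⟩

lemma exists_finset_subset_forall_eval_eq_zero {R σ ι : Type*} [CommRing R] [IsNoetherianRing R]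
    [Finite σ] [Finite ι] (G : Set (ι → MvPolynomial σ R)) :
    ∃ T : Finset (ι → MvPolynomial σ R), ↑T ⊆ G ∧ ∀ x : σ → R,
      (∀ F ∈ T, ∀ i, MvPolynomial.eval x (F i) = 0) →
        ∀ F ∈ G, ∀ i, MvPolynomial.eval x (F i) = 0 := by
  obtain ⟨T, hTG, hspan⟩ := (Submodule.fg_span_iff_fg_span_finset_subset G).1
    (IsNoetherian.noetherian (Submodule.span (MvPolynomial σ R) G))
  refine ⟨T, hTG, fun x hT F hF i => ?_⟩
  have hle : Submodule.span (MvPolynomial σ R) ↑T ≤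
      Submodule.pi Set.univ fun _ => RingHom.ker (MvPolynomial.eval x) :=
    Submodule.span_le.2 fun F hF i _ => hT F hF i
  exact hle (hspan ▸ Submodule.subset_span hF) i trivial

/-- A family of tuples of forms of one common degree `D` that defines `φ` everywhere: each tuple
represents `φ`, and at every point of `P(S)` some tuple does not vanish. -/
structure IsGlobalSystem (φ : projOf K S → Projectivization K (Fin (m + 1) → K)) (D : ℕ)
    (M : J → Fin (m + 1) → MvPolynomial (Fin (Module.finrank K V)) K) : Prop where
  represents (j : J) : Represents φ D (M j)
  exists_ne_zero (x : V) (hx : x ≠ 0) (q : projOf K S) (hq : q.1 = Projectivization.mk K x hx) :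
    ∃ j i, polyEval (M j i) x ≠ 0

lemma IsMorphismOn.exists_isGlobalSystem [Infinite K] (hφ : IsMorphismOn S m φ) :
    ∃ (D : ℕ) (J : Type) (_ : Finite J)
      (M : J → Fin (m + 1) → MvPolynomial (Fin (Module.finrank K V)) K),
      IsGlobalSystem φ D M := by
  obtain ⟨T, hTG, hT⟩ := exists_finset_subset_forall_eval_eq_zero {F | ∃ d, Represents φ d F}
  choose d hd using fun F : T => hTG F.2
  have hle (F : T) : d F ≤ ∑ F, d F :=
    Finset.single_le_sum (fun _ _ => Nat.zero_le _) (Finset.mem_univ F)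
  -- Powers of the coordinates, which have no common zero off the origin, equalize the degrees.
  refine ⟨∑ F, d F, T × Fin (Module.finrank K V), inferInstance,
    fun j i => MvPolynomial.X j.2 ^ (∑ F, d F - d j.1) * j.1.1 i, fun j => ?_, fun x hx q hq => ?_⟩
  · have hmul := (hd j.1).mul (MvPolynomial.isHomogeneous_X_pow (R := K) j.2 (∑ F, d F - d j.1))
    rwa [Nat.sub_add_cancel (hle j.1)] at hmul
  · obtain ⟨F, hFT, i, hi⟩ : ∃ F ∈ T, ∃ i, polyEval (F i) x ≠ 0 := by
      obtain ⟨e, F, hF, i, hi⟩ := hφ.exists_represents hx hq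
      by_contra! h
      exact hi (hT _ h F ⟨e, hF⟩ i)
    obtain ⟨c, hc⟩ : ∃ c, (Module.finBasis K V).repr x c ≠ 0 := by
      by_contra! h
      exact hx ((Module.finBasis K V).ext_elem fun c => by simpa using h c)
    refine ⟨(⟨F, hFT⟩, c), i, ?_⟩
    rw [polyEval_mul]
    refine mul_ne_zero ?_ hi
    simpa [polyEval] using pow_ne_zero _ hc

end GlobalSystem

section Line

variable {K V J : Type} [Field K] [AddCommGroup V] [Module K V]
  {S : Set V} {m d e D n : ℕ} {φ : projOf K S → Projectivization K (Fin (m + 1) → K)} {u w : V}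

lemma mem_span_range_pair {x : V} :
    x ∈ Submodule.span K (Set.range ![u, w]) ↔ ∃ s t : K, s • u + t • w = x := by
  rw [Matrix.range_cons_cons_empty, Submodule.mem_span_pair]

lemma left_mem_span_range_pair : u ∈ Submodule.span K (Set.range ![u, w]) :=
  Submodule.subset_span ⟨0, rfl⟩

lemma right_mem_span_range_pair : w ∈ Submodule.span K (Set.range ![u, w]) :=
  Submodule.subset_span ⟨1, rfl⟩

lemma span_range_pair_eq {u' w' : V} (huw : LinearIndependent K ![u, w])
    (huw' : LinearIndependent K ![u', w']) (hu' : u' ∈ Submodule.span K (Set.range ![u, w]))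
    (hw' : w' ∈ Submodule.span K (Set.range ![u, w])) :
    Submodule.span K (Set.range ![u', w']) = Submodule.span K (Set.range ![u, w]) := by
  have := FiniteDimensional.span_of_finite K (Set.finite_range ![u, w])
  refine Submodule.eq_of_le_of_finrank_eq (Submodule.span_le.2 ?_) ?_
  · rw [Matrix.range_cons_cons_empty]
    exact Set.insert_subset hu' (Set.singleton_subset_iff.2 hw')
  · rw [finrank_span_eq_card huw, finrank_span_eq_card huw']

lemma linearIndependent_and_span_range_pair_eq_iff {u' w' : V}
    (huw : LinearIndependent K ![u, w]) :
    (LinearIndependent K ![u', w'] ∧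
        Submodule.span K (Set.range ![u', w']) = Submodule.span K (Set.range ![u, w])) ↔
      ∃ a b c d : K, a * d ≠ b * c ∧ a • u + b • w = u' ∧ c • u + d • w = w' := by
  constructor
  · rintro ⟨huw', hspan⟩
    obtain ⟨a, b, rfl⟩ := mem_span_range_pair.1 (hspan ▸ left_mem_span_range_pair)
    obtain ⟨c, d, rfl⟩ := mem_span_range_pair.1 (hspan ▸ right_mem_span_range_pair)
    exact ⟨a, b, c, d, ((LinearIndependent.pair_add_smul_add_smul_iff a b c d).1 huw').2, rfl, rfl⟩
  · rintro ⟨a, b, c, d, hdet, rfl, rfl⟩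
    have huw' := (LinearIndependent.pair_add_smul_add_smul_iff a b c d).2 ⟨huw, hdet⟩
    exact ⟨huw', span_range_pair_eq huw huw' (mem_span_range_pair.2 ⟨a, b, rfl⟩)
      (mem_span_range_pair.2 ⟨c, d, rfl⟩)⟩

lemma exists_projOf_eq_mk_smul_add_smul (huw : LinearIndependent K ![u, w])
    (hS : (Submodule.span K (Set.range ![u, w]) : Set V) ⊆ S) {s t : K} (hst : s ≠ 0 ∨ t ≠ 0) :
    ∃ (hx : s • u + t • w ≠ 0) (q : projOf K S),
      q.1 = Projectivization.mk K (s • u + t • w) hx := by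
  have hx : s • u + t • w ≠ 0 := fun h => by
    have := LinearIndependent.pair_iff.1 huw s t h
    tauto
  exact ⟨hx, ⟨_, _, hx, hS (mem_span_range_pair.2 ⟨s, t, rfl⟩), rfl⟩, rfl⟩

variable (φ u w) in
/-- A tuple of binary forms that defines the restriction of `φ` to the line through `u` and `w`, in
the homogeneous coordinates `(s, t)` of `s • u + t • w`. -/
def DefinesOnLine (F : Fin (m + 1) → MvPolynomial (Fin 2) K) : Prop :=
  ∀ (s t : K) (hx : s • u + t • w ≠ 0) (q : projOf K S),
    q.1 = Projectivization.mk K (s • u + t • w) hx →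
    ∃ hF : (fun i => MvPolynomial.eval ![s, t] (F i)) ≠ 0,
      φ q = Projectivization.mk K (fun i => MvPolynomial.eval ![s, t] (F i)) hF

lemma DefinesOnLine.exists_of_mem_span {u' w' : V} {F : Fin (m + 1) → MvPolynomial (Fin 2) K}
    (hF : DefinesOnLine φ u' w' F) (hdeg : ∀ i, (F i).IsHomogeneous d)
    (hu : u ∈ Submodule.span K (Set.range ![u', w']))
    (hw : w ∈ Submodule.span K (Set.range ![u', w'])) :
    ∃ f : Fin (m + 1) → K[X], (∀ i, (f i).natDegree ≤ d) ∧
      DefinesOnLine φ u w fun i => (f i).homogenize d := by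
  obtain ⟨a₀, a₁, rfl⟩ := mem_span_range_pair.1 hu
  obtain ⟨b₀, b₁, rfl⟩ := mem_span_range_pair.1 hw
  refine ⟨fun i => lineRestrict ![a₀, a₁] ![b₀, b₁] (F i),
    fun i => natDegree_lineRestrict_le (hdeg i) _ _, fun s t hx q hq => ?_⟩
  have hcomb : s • (a₀ • u' + a₁ • w') + t • (b₀ • u' + b₁ • w') =
      (s * a₀ + t * b₀) • u' + (s * a₁ + t * b₁) • w' := by
    module
  have hvec : s • ![a₀, a₁] + t • ![b₀, b₁] = ![s * a₀ + t * b₀, s * a₁ + t * b₁] := by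
    simp
  simp only [hcomb] at hx hq
  simpa only [eval_homogenize_lineRestrict (hdeg _), hvec] using hF _ _ hx q hq

variable {f g : Fin (m + 1) → K[X]}

lemma DefinesOnLine.isBasePointFree (hf : DefinesOnLine φ u w fun i => (f i).homogenize d)
    (hdeg : ∀ i, (f i).natDegree ≤ d) (huw : LinearIndependent K ![u, w])
    (hS : (Submodule.span K (Set.range ![u, w]) : Set V) ⊆ S) : IsBasePointFree d f := by
  refine ⟨hdeg, fun s t hst => ?_⟩
  obtain ⟨hx, q, hq⟩ := exists_projOf_eq_mk_smul_add_smul huw hS hst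
  exact Function.ne_iff.1 (hf s t hx q hq).1

lemma DefinesOnLine.isProportional [Infinite K]
    (hf : DefinesOnLine φ u w fun i => (f i).homogenize d) (hfd : ∀ i, (f i).natDegree ≤ d)
    (hg : DefinesOnLine φ u w fun i => (g i).homogenize e) (hge : ∀ i, (g i).natDegree ≤ e)
    (huw : LinearIndependent K ![u, w])
    (hS : (Submodule.span K (Set.range ![u, w]) : Set V) ⊆ S) : IsProportional f g := by
  refine fun i l => Polynomial.funext fun s => ?_
  obtain ⟨hx, q, hq⟩ := exists_projOf_eq_mk_smul_add_smul huw hS (.inr (one_ne_zero (α := K)))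
  obtain ⟨_, hφf⟩ := hf s 1 hx q hq
  obtain ⟨_, hφg⟩ := hg s 1 hx q hq
  simpa only [eval_mul, eval_homogenize_right_one (hfd _), eval_homogenize_right_one (hge _)] using
    isProportional_of_mk_eq_mk (hφf.symm.trans hφg) i l

lemma IsBasePointFree.isUnit_of_forall_dvd_homogenize [IsAlgClosed K] (hg : IsBasePointFree e g)
    {r : MvPolynomial (Fin 2) K} (hr : ∀ i, r ∣ (g i).homogenize e) : IsUnit r := by
  refine isUnit_of_forall_eval_ne_zero fun x hx hrx => ?_
  have hx01 : x 0 ≠ 0 ∨ x 1 ≠ 0 := Fin.exists_fin_two.1 (Function.ne_iff.1 hx)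
  obtain ⟨i, hi⟩ := hg.exists_ne_zero (x 0) (x 1) hx01
  obtain ⟨c, hc⟩ := hr i
  rw [← FinVec.etaExpand_eq x] at hrx
  exact hi (by rw [hc, map_mul]; exact mul_eq_zero_of_left hrx _)

lemma planeDeg_eq [IsAlgClosed K]
    (hgφ : DefinesOnLine φ u w fun i => (g i).homogenize e) (hge : ∀ i, (g i).natDegree ≤ e)
    (huw : LinearIndependent K ![u, w])
    (hS : (Submodule.span K (Set.range ![u, w]) : Set V) ⊆ S) :
    planeDeg m φ (Submodule.span K (Set.range ![u, w])) = e := by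
  have hg := hgφ.isBasePointFree hge huw hS
  refine (congrArg sSup ?_).trans (csSup_singleton e)
  refine Set.eq_singleton_iff_unique_mem.2 ⟨?_, ?_⟩
  · exact ⟨u, w, left_mem_span_range_pair, right_mem_span_range_pair, huw,
      fun i => (g i).homogenize e, fun i => isHomogeneous_homogenize _,
      fun r hr => hg.isUnit_of_forall_dvd_homogenize hr, hgφ⟩
  · rintro d ⟨u', w', hu', hw', huw', F, hF, -, hFφ⟩
    have hspan := span_range_pair_eq huw huw' hu' hw'
    obtain ⟨f, hfd, hfφ⟩ := DefinesOnLine.exists_of_mem_span (u := u) (w := w) hFφ hF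
      (hspan ▸ left_mem_span_range_pair) (hspan ▸ right_mem_span_range_pair)
    exact (hfφ.isBasePointFree hfd huw hS).degree_unique hg
      (hfφ.isProportional hfd hgφ hge huw hS)

variable [FiniteDimensional K V]

/-- The restriction of a polynomial function on `V` to the line through `u` and `w`, in the affine
coordinate `s` of the point `s • u + w`. -/
def polyRestrict (u w : V) (F : MvPolynomial (Fin (Module.finrank K V)) K) : K[X] :=
  lineRestrict ((Module.finBasis K V).repr u) ((Module.finBasis K V).repr w) F

lemma eval_polyRestrict (u w : V) (F : MvPolynomial (Fin (Module.finrank K V)) K) (s : K) :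
    (polyRestrict u w F).eval s = polyEval F (s • u + w) := by
  simp only [polyRestrict, eval_lineRestrict, polyEval, map_add, map_smul]
  rfl

lemma eval_homogenize_polyRestrict {F : MvPolynomial (Fin (Module.finrank K V)) K}
    (hF : F.IsHomogeneous d) (u w : V) (s t : K) :
    MvPolynomial.eval ![s, t] ((polyRestrict u w F).homogenize d) = polyEval F (s • u + t • w) := by
  simp only [polyRestrict, eval_homogenize_lineRestrict hF, polyEval, map_add, map_smul]
  rfl

namespace IsGlobalSystem

variable {M : J → Fin (m + 1) → MvPolynomial (Fin (Module.finrank K V)) K}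

lemma isBasePointFree_polyRestrict (hM : IsGlobalSystem φ D M) (huw : LinearIndependent K ![u, w])
    (hS : (Submodule.span K (Set.range ![u, w]) : Set V) ⊆ S) :
    IsBasePointFree D fun x : J × Fin (m + 1) => polyRestrict u w (M x.1 x.2) := by
  refine ⟨fun x => natDegree_lineRestrict_le ((hM.represents x.1).isHomogeneous x.2) _ _,
    fun s t hst => ?_⟩
  obtain ⟨hx, q, hq⟩ := exists_projOf_eq_mk_smul_add_smul huw hS hst
  obtain ⟨j, l, hjl⟩ := hM.exists_ne_zero _ hx q hq
  refine ⟨(j, l), ?_⟩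
  rwa [eval_homogenize_polyRestrict ((hM.represents j).isHomogeneous l)]

lemma isProportional_polyRestrict [Infinite K] (hM : IsGlobalSystem φ D M)
    (huw : LinearIndependent K ![u, w])
    (hS : (Submodule.span K (Set.range ![u, w]) : Set V) ⊆ S) (j j' : J) :
    IsProportional (fun l => polyRestrict u w (M j l)) fun l => polyRestrict u w (M j' l) := by
  refine fun i l => Polynomial.funext fun s => ?_
  obtain ⟨hx, q, hq⟩ := exists_projOf_eq_mk_smul_add_smul huw hS (.inr (one_ne_zero (α := K)))
    (s := s)
  simp only [eval_mul, eval_polyRestrict]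
  simp only [one_smul] at hx hq
  by_cases hj : (fun l => polyEval (M j l) (s • u + w)) = 0
  · simp only [congrFun hj _, Pi.zero_apply, zero_mul]
  by_cases hj' : (fun l => polyEval (M j' l) (s • u + w)) = 0
  · simp only [congrFun hj' _, Pi.zero_apply, mul_zero]
  exact isProportional_of_mk_eq_mk (((hM.represents j).apply_eq _ hx q hq hj).symm.trans
    ((hM.represents j').apply_eq _ hx q hq hj')) i l

lemma definesOnLine_of_polyRestrict_eq_mul (hM : IsGlobalSystem φ D M) {h : J → K[X]}
    (hh : ∀ j, (h j).natDegree ≤ d) (hg : ∀ l, (g l).natDegree ≤ e) (hD : d + e = D)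
    (hhg : ∀ j l, polyRestrict u w (M j l) = h j * g l) :
    DefinesOnLine φ u w fun l => (g l).homogenize e := by
  intro s t hx q hq
  obtain ⟨j, i, hj⟩ := hM.exists_ne_zero _ hx q hq
  have hrow : MvPolynomial.eval ![s, t] ((h j).homogenize d) •
      (fun l => MvPolynomial.eval ![s, t] ((g l).homogenize e)) =
        fun l => polyEval (M j l) (s • u + t • w) := funext fun l => by
    rw [← eval_homogenize_polyRestrict ((hM.represents j).isHomogeneous l), hhg, ← hD,
      homogenize_mul _ _ (hh j) (hg l), map_mul]
    rfl
  have hne : (fun l => polyEval (M j l) (s • u + t • w)) ≠ 0 := Function.ne_iff.2 ⟨i, hj⟩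
  exact ⟨right_ne_zero_of_smul (hrow ▸ hne), ((hM.represents j).apply_eq _ hx q hq hne).trans
    ((Projectivization.mk_eq_mk_iff' K _ _ _ _).2 ⟨_, hrow⟩)⟩

variable [IsAlgClosed K]

lemma exists_planeDeg_factorization (hM : IsGlobalSystem φ D M)
    (huw : LinearIndependent K ![u, w])
    (hS : (Submodule.span K (Set.range ![u, w]) : Set V) ⊆ S) :
    ∃ (e' : ℕ) (h : J → K[X]) (g : Fin (m + 1) → K[X]),
      e' + planeDeg m φ (Submodule.span K (Set.range ![u, w])) = D ∧ IsBasePointFree e' h ∧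
      IsBasePointFree (planeDeg m φ (Submodule.span K (Set.range ![u, w]))) g ∧
      ∀ j s l, polyEval (M j l) (s • u + w) = (h j).eval s * (g l).eval s := by
  obtain ⟨h, g, hhg⟩ :=
    exists_eq_mul_of_isProportional_rows (hM.isProportional_polyRestrict huw hS)
  have hfree := hM.isBasePointFree_polyRestrict huw hS
  simp only [hhg] at hfree
  obtain ⟨e', e, hD, hh, hg⟩ := hfree.exists_factor_degrees
  have hgφ :=
    hM.definesOnLine_of_polyRestrict_eq_mul hh.natDegree_le hg.natDegree_le hD hhg
  rw [planeDeg_eq hgφ hg.natDegree_le huw hS]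
  exact ⟨e', h, g, hD, hh, hg, fun j s l => by rw [← eval_polyRestrict, hhg, eval_mul]⟩

lemma planeDeg_le (hM : IsGlobalSystem φ D M) (huw : LinearIndependent K ![u, w])
    (hS : (Submodule.span K (Set.range ![u, w]) : Set V) ⊆ S) :
    planeDeg m φ (Submodule.span K (Set.range ![u, w])) ≤ D := by
  obtain ⟨e', -, -, hD, -⟩ := hM.exists_planeDeg_factorization huw hS
  exact hD ▸ Nat.le_add_left _ e'

lemma planeDeg_lt_iff (hM : IsGlobalSystem φ D M) (huw : LinearIndependent K ![u, w])
    (hS : (Submodule.span K (Set.range ![u, w]) : Set V) ⊆ S) :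
    planeDeg m φ (Submodule.span K (Set.range ![u, w])) < n ↔
      HasRowDirectionOfDegreeLT n fun j (s : K) l => polyEval (M j l) (s • u + w) := by
  obtain ⟨e', h, g, -, hh, hg, hhg⟩ := hM.exists_planeDeg_factorization huw hS
  exact hg.lt_iff_hasRowDirectionOfDegreeLT hh.ne_zero hhg

lemma sub_planeDeg_lt_iff (hM : IsGlobalSystem φ D M) (huw : LinearIndependent K ![u, w])
    (hS : (Submodule.span K (Set.range ![u, w]) : Set V) ⊆ S) :
    D - planeDeg m φ (Submodule.span K (Set.range ![u, w])) < n ↔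
      HasRowDirectionOfDegreeLT n fun l (s : K) j => polyEval (M j l) (s • u + w) := by
  obtain ⟨e', h, g, hD, hh, hg, hhg⟩ := hM.exists_planeDeg_factorization huw hS
  rw [Nat.sub_eq_of_eq_add hD.symm]
  exact hh.lt_iff_hasRowDirectionOfDegreeLT hg.ne_zero fun l s j => by rw [hhg, mul_comm]

end IsGlobalSystem

end Line

section Planes

open scoped Topology

lemma isLocallyConstant_of_isClosed_lt {α : Type*} [TopologicalSpace α] {f : α → ℕ} {D : ℕ}
    (hfD : ∀ x, f x ≤ D) (hf : ∀ n, IsClosed {x | f x < n})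
    (hDf : ∀ n, IsClosed {x | D - f x < n}) : IsLocallyConstant f := by
  refine IsLocallyConstant.iff_isOpen_fiber.2 fun y => ?_
  have hcompl : (f ⁻¹' {y})ᶜ = {x | f x < y} ∪ {x | D - f x < D - y} := by
    ext x
    have := hfD x
    simp only [Set.mem_compl_iff, Set.mem_preimage, Set.mem_singleton_iff, Set.mem_union,
      Set.mem_ofPred_eq]
    omega
  exact isClosed_compl_iff.1 (hcompl ▸ (hf y).union (hDf (D - y)))

variable {K L : Type} [Field K] [LieRing L] [LieAlgebra K L] {C : Set (Submodule K L)}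

lemma planeMk_surjective (hC : ∀ v ∈ C, Module.finrank K v = 2) :
    Function.Surjective (planeMk C) := by
  intro v
  have hv := hC v.1 v.2
  have : Module.Finite K v.1 := Module.finite_of_finrank_pos (by omega)
  let b := Module.finBasisOfFinrankEq K v.1 hv
  have hb : ![(b 0 : L), b 1] = v.1.subtype ∘ b := by
    funext i; fin_cases i <;> rfl
  have hspan : Submodule.span K (Set.range ![(b 0 : L), b 1]) = v.1 := by
    rw [hb, Set.range_comp, Submodule.span_image, b.span_eq, Submodule.map_top,
      Submodule.range_subtype]
  have hindep : LinearIndependent K ![(b 0 : L), b 1] :=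
    hb ▸ b.linearIndependent.map' _ (Submodule.ker_subtype _)
  exact ⟨⟨(b 0, b 1), hindep, hspan.symm ▸ v.2⟩, Subtype.ext hspan⟩

lemma isOpenMap_planeMk :
    @IsOpenMap _ _ (.induced Subtype.val (zar K (L × L))) (planeTop C) (planeMk C) := by
  let _ := zar K (L × L)
  let _ := planeTop C
  rintro _ ⟨O, hO, rfl⟩
  let baseChange (a b c d : K) : L × L →ₗ[K] L × L :=
    (a • LinearMap.fst K L L + b • LinearMap.snd K L L).prod
      (c • LinearMap.fst K L L + d • LinearMap.snd K L L)
  have hpre : planeMk C ⁻¹' (planeMk C '' (Subtype.val ⁻¹' O)) = Subtype.val ⁻¹'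
      ⋃ (a) (b) (c) (d) (_ : a * d ≠ b * c), baseChange a b c d ⁻¹' O := by
    ext z
    have hz (x : L × L) := linearIndependent_and_span_range_pair_eq_iff (u' := x.1) (w' := x.2)
      z.2.1
    simp only [Set.mem_preimage, Set.mem_image, Set.mem_iUnion, exists_prop]
    constructor
    · rintro ⟨z', hz'O, hz'⟩
      obtain ⟨a, b, c, d, hdet, hu, hw⟩ := (hz z').1 ⟨z'.2.1, congrArg Subtype.val hz'⟩
      exact ⟨a, b, c, d, hdet, (Prod.ext hu hw : baseChange a b c d z = z') ▸ hz'O⟩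
    · rintro ⟨a, b, c, d, hdet, hO⟩
      obtain ⟨hindep, hspan⟩ := (hz (baseChange a b c d z)).2 ⟨a, b, c, d, hdet, rfl, rfl⟩
      exact ⟨⟨baseChange a b c d z, hindep, hspan ▸ z.2.2⟩, hO, Subtype.ext hspan⟩
  refine isOpen_coinduced.2 (hpre ▸ IsOpen.preimage continuous_subtype_val ?_)
  exact isOpen_iUnion fun a => isOpen_iUnion fun b => isOpen_iUnion fun c => isOpen_iUnion fun d =>
    isOpen_iUnion fun _ => hO.preimage (continuous_zar (baseChange a b c d))

lemma isLocallyConstant_of_comp_planeMk {β : Type*} (hC : ∀ v ∈ C, Module.finrank K v = 2)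
    {X : Set C} {f : X → β}
    (hf : @IsLocallyConstant _ β (.induced Subtype.val (.induced Subtype.val (zar K (L × L))))
      (f ∘ X.restrictPreimage (planeMk C))) :
    @IsLocallyConstant X β (.induced Subtype.val (planeTop C)) f := by
  let _ := zar K (L × L)
  let _ := planeTop C
  have hquot : IsOpenQuotientMap (X.restrictPreimage (planeMk C)) :=
    ⟨(planeMk_surjective hC).restrictPreimage X, continuous_coinduced_rng.restrictPreimage,
      isOpenMap_planeMk.restrictPreimage X⟩
  exact fun s => hquot.isQuotientMap.isOpen_preimage.1 (hf s)

variable [FiniteDimensional K L] {J : Type} {S : Set L} {m D : ℕ}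
  {φ : projOf K S → Projectivization K (Fin (m + 1) → K)}
  {M : J → Fin (m + 1) → MvPolynomial (Fin (Module.finrank K L)) K}

lemma IsGlobalSystem.isLocallyConstant_planeDeg [IsAlgClosed K] [Finite J]
    (hM : IsGlobalSystem φ D M) (hC : ∀ v ∈ C, Module.finrank K v = 2) {X : Set C}
    (hXS : ∀ v ∈ X, (v.1 : Set L) ⊆ S) :
    @IsLocallyConstant X ℕ (.induced Subtype.val (planeTop C)) fun v => planeDeg m φ v.1 := by
  let _ := zar K (L × L)
  suffices IsLocallyConstant fun z : planeMk C ⁻¹' X => planeDeg m φ (planeMk C z.1).1 from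
    isLocallyConstant_of_comp_planeMk hC this
  have hcont : Continuous fun z : planeMk C ⁻¹' X => z.1.1 :=
    continuous_subtype_val.comp continuous_subtype_val
  refine isLocallyConstant_of_isClosed_lt (D := D)
    (fun z => hM.planeDeg_le z.1.2.1 (hXS _ z.2)) (fun n => ?_) fun n => ?_
  · convert (isClosed_hasRowDirectionOfDegreeLT (fun j s l =>
      polyEval_smul_fst_add_snd_mem_polyFuns (M j l) s) n).preimage hcont using 1
    exact Set.ext fun z : planeMk C ⁻¹' X => hM.planeDeg_lt_iff z.1.2.1 (hXS _ z.2)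
  · convert (isClosed_hasRowDirectionOfDegreeLT (fun l s j =>
      polyEval_smul_fst_add_snd_mem_polyFuns (M j l) s) n).preimage hcont using 1
    exact Set.ext fun z : planeMk C ⁻¹' X => hM.sub_planeDeg_lt_iff z.1.2.1 (hXS _ z.2)

end Planes

end ElemAb

theorem statement14_general {k : Type} [Field k] [IsAlgClosed k]
    {L : Type} [LieRing L] [LieAlgebra k L] [FiniteDimensional k L]
    {C : Set (Submodule k L)} (hC : ∀ v ∈ C, Module.finrank k v = 2)
    {X : Set C} {S : Set L} (hXS : ∀ v ∈ X, (v.1 : Set L) ⊆ S)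
    {m : ℕ} {φ : projOf k S → Projectivization k (Fin (m + 1) → k)} (hφ : IsMorphismOn S m φ) :
    (@IsLocallyConstant X ℕ (.induced Subtype.val (planeTop C)) fun v => planeDeg m φ v.1) ∧
    (@IsPreconnected _ (planeTop C) X → ∀ v w : X, planeDeg m φ v.1 = planeDeg m φ w.1) := by
  have : Infinite k := IsAlgClosed.instInfinite
  obtain ⟨D, J, _, M, hM⟩ := hφ.exists_isGlobalSystem
  have hloc := hM.isLocallyConstant_planeDeg hC hXS
  refine ⟨hloc, fun hconn v w => ?_⟩
  let _ := planeTop C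
  have := isPreconnected_iff_preconnectedSpace.1 hconn
  exact hloc.apply_eq_of_preconnectedSpace v w

/-- Let `X ⊆ Gr₂(g)^{V(g)}` be closed, `V_X = ⋃_{v ∈ X} v`, and let
`φ : P(V_X) → P^m` be a morphism of varieties.  Then the map `deg_φ : X → ℕ`,
`v ↦ deg (φ|_{P(v)})`, is locally constant; and if `X` is connected, it is constant. -/
theorem statement14
    (p : ℕ) (hp : p.Prime) (hp3 : 3 ≤ p)
    (k : Type) [Field k] [IsAlgClosed k] [CharP k p]
    (L : Type) [LieRing L] [LieAlgebra k L] [FiniteDimensional k L]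
    (P : pStructure p k L)
    (X : Set ↥P.gr2V) (hX : @IsClosed _ (planeTop P.gr2V) X)
    (m : ℕ)
    (φ : projOf k (⋃ v ∈ X, ((v : Submodule k L) : Set L)) →
      Projectivization k (Fin (m + 1) → k))
    (hφ : IsMorphismOn (⋃ v ∈ X, ((v : Submodule k L) : Set L)) m φ) :
    -- (1) `deg_φ` is locally constant on `X`
    (@IsLocallyConstant ↥X ℕ (TopologicalSpace.induced Subtype.val (planeTop P.gr2V))
      (fun v => planeDeg m φ (v.1 : Submodule k L))) ∧
    -- (2) if `X` is connected then `deg_φ` is constant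
    (@IsPreconnected _ (planeTop P.gr2V) X →
      ∀ v w : ↥X, planeDeg m φ (v.1 : Submodule k L) = planeDeg m φ (w.1 : Submodule k L)) :=
  statement14_general (fun _ hv => hv.1) (fun _ hv => Set.subset_biUnion_of_mem
    (u := fun v : ↥P.gr2V => ((v : Submodule k L) : Set L)) hv) hφ
end
end

section
/- Let e_r be the r-dimensional elementary abelian restricted Lie algebra over k, j ∈ {1,…,p−1}, and let M be a U₀(e_r)-module with the equal j-images property. Then: (1) the submodule Rad^{j−1}(M) has the equal images property (equal 1-images); (2) M has the equal ℓ-images property for every ℓ ∈ {j, j+1, …, p−1}; (3) the Loewy length of M satisfies ℓℓ(M) ≤ p; (4) if r ≥ 2, there exist natural numbers c_{j+1}, …, c_{ℓℓ(M)} ∈ ℕ and functions a_i : e_r\{0} → ℕ₀ such that for every x ∈ e_r\{0} the local Jordan type of M at x is Jt(M,x) = ⊕_{i=1}^{j} a_i(x)[i] ⊕ ⊕_{i=j+1}^{ℓℓ(M)} c_i[i]. -/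
noncomputable section

namespace ElemAb

variable (p : ℕ) (k : Type) [Field k]

variable (L : Type) [LieRing L] [LieAlgebra k L]

variable {p k L}

section Rep

variable (P : pStructure p k L) (M : Type) [AddCommGroup M] [Module k M]

/-- A module over the restricted enveloping algebra `U₀(g)`, given as a representation of the
restricted Lie algebra: brackets go to commutators of operators and the `p`-map goes to the
`p`-th power of operators. -/
structure RestRep : Type where
  ρ : L →ₗ[k] Module.End k M
  map_bracket : ∀ x y : L, ρ ⁅x, y⁆ = ρ x * ρ y - ρ y * ρ x
  map_pmap : ∀ x : L, ρ (P.pmap x) = (ρ x) ^ p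

variable {P M}

/-- `M` has constant `j`-rank `r`:  all operators `x_M^j`, for `x ∈ V(g)∖{0}`, have rank `r`. -/
def RestRep.HasConstRank (R : RestRep P M) (j r : ℕ) : Prop :=
  ∀ x ∈ P.null, x ≠ 0 → Module.finrank k ↥(LinearMap.range ((R.ρ x) ^ j)) = r

/-- The radical series `Rad^s(M) = J^s·M` of `M` over `U₀(g)` for `g` unipotent
(e.g. elementary abelian), where `J` is the ideal generated by the action of `g`. -/
def RestRep.radPow (R : RestRep P M) : ℕ → Submodule k M
  | 0 => ⊤
  | s + 1 => ⨆ x : L, Submodule.map (R.ρ x) (R.radPow s)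

/-- The Loewy length of `M`. -/
noncomputable def RestRep.loewy (R : RestRep P M) : ℕ := sInf {s | R.radPow s = ⊥}

end Rep

section Jordan

variable {V : Type} [AddCommGroup V] [Module k V]

/-- The multiplicity of the Jordan block `[i]` in the Jordan type of a (nilpotent)
endomorphism `f`. -/
noncomputable def jordanMult (f : Module.End k V) (i : ℕ) : ℕ :=
  Module.finrank k ↥(LinearMap.ker f ⊓ LinearMap.range (f ^ (i - 1))) -
  Module.finrank k ↥(LinearMap.ker f ⊓ LinearMap.range (f ^ i))

end Jordan
end ElemAb

open ElemAb

/-!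
Polarization: in the binomial expansion of `(v + t w)ⁿ z` the coefficient of `t` is
`n vⁿ⁻¹ w z`, so when `n!` is invertible `Jⁿ M` is the sum of the images of the `n`-th powers `vⁿ`.
Equal `j`-images therefore mean `Jʲ M = vʲ M` for any `v ≠ 0`, and commutativity propagates this to
`Jˢ⁺¹ M = v Jˢ M` for all `s ≥ j - 1`. This gives the first three claims.

For the Jordan type, every `v ≠ 0` thus maps each radical layer `Jˢ M / Jˢ⁺¹ M` with `s ≥ j` onto
the next one, and the number of Jordan blocks of size `s + 1` is the drop in dimension between
these two layers. It is positive when `Jˢ M ≠ 0`: otherwise all `v ≠ 0` would act as isomorphisms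
between nonzero layers, but for `F`, `G` the actions of independent `v`, `w` the map `G - t F` is
singular when `t` is an eigenvalue of `F⁻¹ G`.
-/

namespace ElemAb

open Module (finrank)

section Polarization

variable {k M : Type*} [Field k] [Infinite k] [AddCommGroup M] [Module k M]

theorem mem_of_forall_sum_pow_smul_mem (N : Submodule k M) {n : ℕ} {c : ℕ → M}
    (h : ∀ t : k, ∑ i ∈ Finset.range n, t ^ i • c i ∈ N) {i : ℕ} (hi : i < n) : c i ∈ N := by
  by_contra hc
  obtain ⟨φ, hφ, hN⟩ := N.exists_le_ker_of_notMem hc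
  have hpoly : ∑ m ∈ Finset.range n, Polynomial.monomial m (φ (c m)) = 0 := by
    refine Polynomial.funext fun t => ?_
    have ht : φ (∑ m ∈ Finset.range n, t ^ m • c m) = 0 := hN (h t)
    simpa [Polynomial.eval_finsetSum, mul_comm] using ht
  have hcoeff := congrArg (Polynomial.coeff · i) hpoly
  simp only [Polynomial.finsetSum_coeff, Polynomial.coeff_monomial, Polynomial.coeff_zero,
    Finset.sum_ite_eq', Finset.mem_range, hi, if_true] at hcoeff
  exact hφ hcoeff

theorem pow_mul_apply_mem_of_forall_add_smul_pow_mem (N : Submodule k M) {f g : Module.End k M}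
    (hfg : Commute f g) {n : ℕ} (hn : ((n + 1 : ℕ) : k) ≠ 0) {z : M}
    (h : ∀ t : k, ((f + t • g) ^ (n + 1)) z ∈ N) : (f ^ n * g) z ∈ N := by
  have hexpand (t : k) : ((f + t • g) ^ (n + 1)) z =
      ∑ i ∈ Finset.range (n + 2), t ^ i • ((n + 1).choose i : k) • (g ^ i * f ^ (n + 1 - i)) z := by
    rw [add_comm f, (hfg.symm.smul_left t).add_pow, LinearMap.sum_apply]
    simp [smul_pow, Nat.cast_smul_eq_nsmul, Module.End.natCast_apply]
  have hlinear := mem_of_forall_sum_pow_smul_mem N (fun t => hexpand t ▸ h t)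
    (show 1 < n + 2 by omega)
  rw [Nat.choose_one_right, pow_one, Nat.add_sub_cancel, ← (hfg.pow_left n).eq] at hlinear
  exact (N.smul_mem_iff hn).1 hlinear

end Polarization

theorem finrank_map_add_finrank_ker_inf {k M M' : Type*} [DivisionRing k] [AddCommGroup M]
    [Module k M] [AddCommGroup M'] [Module k M'] (f : M →ₗ[k] M') (N : Submodule k M)
    [FiniteDimensional k N] :
    finrank k (N.map f) + finrank k ↥(LinearMap.ker f ⊓ N) = finrank k N := by
  rw [← (f.domRestrict N).finrank_range_add_finrank_ker, LinearMap.range_domRestrict,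
    LinearMap.ker_domRestrict, ← Submodule.finrank_map_subtype_eq, Submodule.map_comap_subtype,
    inf_comm]

theorem range_pow_succ {k M : Type*} [Semiring k] [AddCommMonoid M] [Module k M]
    (f : Module.End k M) (n : ℕ) :
    LinearMap.range (f ^ (n + 1)) = (LinearMap.range (f ^ n)).map f := by
  rw [pow_succ', Module.End.mul_eq_comp, LinearMap.range_comp]

section Pencil

variable {k V X Y : Type*} [Field k] [IsAlgClosed k] [AddCommGroup V] [Module k V]
  [AddCommGroup X] [Module k X] [FiniteDimensional k X] [AddCommGroup Y] [Module k Y]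

theorem exists_not_injective_sub_smul [Nontrivial X] {F : X →ₗ[k] Y} (hF : Function.Bijective F)
    (G : X →ₗ[k] Y) : ∃ t : k, ¬ Function.Injective (G - t • F) := by
  let e := LinearEquiv.ofBijective F hF
  obtain ⟨t, ht⟩ := Module.End.exists_eigenvalue (e.symm.toLinearMap ∘ₗ G)
  obtain ⟨u, hu⟩ := ht.exists_hasEigenvector
  have hGF : G u = t • F u := by
    have heigen : e.symm (G u) = t • u := hu.apply_eq_smul
    rwa [LinearEquiv.symm_apply_eq, map_smul] at heigen
  refine ⟨t, fun hinj => hu.2 (hinj ?_)⟩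
  simp [hGF]

theorem finrank_lt_finrank_of_forall_surjective [Nontrivial X] (hV : 1 < Module.rank k V)
    (D : V →ₗ[k] X →ₗ[k] Y) (hD : ∀ v ≠ 0, Function.Surjective (D v)) :
    finrank k Y < finrank k X := by
  have : Nontrivial V := rank_pos_iff_nontrivial.1 (zero_lt_one.trans hV)
  obtain ⟨v, hv⟩ := exists_ne (0 : V)
  obtain ⟨w, hvw⟩ := exists_linearIndependent_pair_of_one_lt_rank hV hv
  have : FiniteDimensional k Y := Module.Finite.of_surjective (D v) (hD v hv)
  refine (LinearMap.finrank_le_finrank_of_surjective (hD v hv)).lt_of_ne fun heq => ?_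
  have hinj {u : V} (hu : u ≠ 0) : Function.Injective (D u) :=
    (LinearMap.injective_iff_surjective_of_finrank_eq_finrank heq.symm).2 (hD u hu)
  obtain ⟨t, ht⟩ := exists_not_injective_sub_smul ⟨hinj hv, hD v hv⟩ (D w)
  have hne : w - t • v ≠ 0 := fun h0 =>
    one_ne_zero (LinearIndependent.pair_iff.1 hvw (-t) 1 (by rw [← h0]; module)).2
  exact ht (by simpa only [map_sub, map_smul] using hinj hne)

end Pencil

section RadicalSeries

variable {k V M : Type*} [CommRing k] [AddCommGroup V] [Module k V] [AddCommGroup M] [Module k M]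

/-- The radical series `Jˢ M` of a module `M` acted on by a linear family `ρ` of operators,
where `J` is the (non-unital) algebra generated by the operators `ρ v`. -/
def radSeries (ρ : V →ₗ[k] Module.End k M) : ℕ → Submodule k M
  | 0 => ⊤
  | s + 1 => ⨆ v, (radSeries ρ s).map (ρ v)

/-- The Loewy length of `M`: the least `s` with `Jˢ M = 0`, or the junk value `0` if there is no
such `s`. -/
def loewyLength (ρ : V →ₗ[k] Module.End k M) : ℕ := sInf {s | radSeries ρ s = ⊥}

/-- The equal `j`-images property of `M`: all nonzero `v` have the same image `vʲ M`. -/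
def HasEqualImages (ρ : V →ₗ[k] Module.End k M) (j : ℕ) : Prop :=
  ∀ v w, v ≠ 0 → w ≠ 0 → LinearMap.range (ρ v ^ j) = LinearMap.range (ρ w ^ j)

variable (ρ : V →ₗ[k] Module.End k M)

theorem map_radSeries_le (v : V) (s : ℕ) : (radSeries ρ s).map (ρ v) ≤ radSeries ρ (s + 1) :=
  le_iSup (fun w => (radSeries ρ s).map (ρ w)) v

theorem range_pow_le_radSeries (v : V) (s : ℕ) : LinearMap.range (ρ v ^ s) ≤ radSeries ρ s := by
  induction s with
  | zero => exact le_top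
  | succ s ih =>
    rw [range_pow_succ]
    exact (Submodule.map_mono ih).trans (map_radSeries_le ρ v s)

theorem radSeries_succ_le (s : ℕ) : radSeries ρ (s + 1) ≤ radSeries ρ s := by
  induction s with
  | zero => exact le_top
  | succ s ih => exact iSup_mono fun _ => Submodule.map_mono ih

theorem radSeries_antitone : Antitone (radSeries ρ) := antitone_nat_of_succ_le (radSeries_succ_le ρ)

variable {ρ}

theorem radSeries_eq_of_succ_eq {s t : ℕ} (h : radSeries ρ (s + 1) = radSeries ρ s) (hst : s ≤ t) :
    radSeries ρ t = radSeries ρ s := by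
  induction t, hst using Nat.le_induction with
  | base => rfl
  | succ t _ ih => rw [← h, radSeries, ih, radSeries]

theorem radSeries_succ_lt {s n : ℕ} (hn : radSeries ρ n = ⊥) (hs : radSeries ρ s ≠ ⊥) :
    radSeries ρ (s + 1) < radSeries ρ s := by
  refine (radSeries_succ_le ρ s).lt_of_ne fun heq => hs (le_bot_iff.1 ?_)
  calc radSeries ρ s
      = radSeries ρ (max s n) := (radSeries_eq_of_succ_eq heq (le_max_left s n)).symm
    _ ≤ radSeries ρ n := radSeries_antitone ρ (le_max_right s n)
    _ = ⊥ := hn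

theorem map_radSeries_succ (hcomm : ∀ v w, Commute (ρ v) (ρ w)) {v : V} {s : ℕ}
    (h : (radSeries ρ s).map (ρ v) = radSeries ρ (s + 1)) :
    (radSeries ρ (s + 1)).map (ρ v) = radSeries ρ (s + 2) := by
  calc (radSeries ρ (s + 1)).map (ρ v)
      = ⨆ w, ((radSeries ρ s).map (ρ w)).map (ρ v) := Submodule.map_iSup _ _
    _ = ⨆ w, ((radSeries ρ s).map (ρ v)).map (ρ w) := by
        simp only [← Submodule.map_comp, ← Module.End.mul_eq_comp, (hcomm v _).eq]
    _ = radSeries ρ (s + 2) := by rw [h]; rfl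

end RadicalSeries

section PowerImages

variable {k V M : Type*} [Field k] [Infinite k] [AddCommGroup V] [Module k V] [AddCommGroup M]
  [Module k M] {ρ : V →ₗ[k] Module.End k M}

theorem map_pow_radSeries_le (hcomm : ∀ v w, Commute (ρ v) (ρ w)) {m n : ℕ}
    (hfact : ((m + n).factorial : k) ≠ 0) (v : V) :
    (radSeries ρ m).map (ρ v ^ n) ≤ ⨆ w, LinearMap.range (ρ w ^ (m + n)) := by
  induction m generalizing n v with
  | zero => simpa [radSeries] using le_iSup (fun w => LinearMap.range (ρ w ^ n)) v
  | succ m ih =>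
    have hadd : m + 1 + n = m + (n + 1) := by omega
    rw [hadd] at hfact ⊢
    have hn : ((n + 1 : ℕ) : k) ≠ 0 := fun h0 => hfact <| by
      obtain ⟨c, hc⟩ := Nat.dvd_factorial n.succ_pos (Nat.le_add_left (n + 1) m)
      rw [hc, Nat.cast_mul, h0, zero_mul]
    rw [radSeries, Submodule.map_iSup]
    refine iSup_le fun w => ?_
    rw [← Submodule.map_comp, ← Module.End.mul_eq_comp]
    rintro _ ⟨z, hz, rfl⟩
    refine pow_mul_apply_mem_of_forall_add_smul_pow_mem _ (hcomm v w) hn fun t => ?_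
    rw [← map_smul, ← map_add]
    exact ih hfact _ (Submodule.mem_map_of_mem hz)

theorem radSeries_eq_iSup_range_pow (hcomm : ∀ v w, Commute (ρ v) (ρ w)) {n : ℕ}
    (hfact : (n.factorial : k) ≠ 0) : radSeries ρ n = ⨆ v, LinearMap.range (ρ v ^ n) := by
  refine le_antisymm ?_ (iSup_le fun v => range_pow_le_radSeries ρ v n)
  simpa [Module.End.one_eq_id] using map_pow_radSeries_le hcomm (n := 0) hfact 0

end PowerImages

section RadicalLayers

variable {k V M : Type*} [CommRing k] [AddCommGroup V] [Module k V] [AddCommGroup M] [Module k M]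

/-- The radical layer `Jˢ M / Jˢ⁺¹ M`. -/
abbrev RadLayer (ρ : V →ₗ[k] Module.End k M) (s : ℕ) : Type _ :=
  radSeries ρ s ⧸ (radSeries ρ (s + 1)).submoduleOf (radSeries ρ s)

variable (ρ : V →ₗ[k] Module.End k M)

theorem mapsTo_radSeries (v : V) (s : ℕ) : ∀ z ∈ radSeries ρ s, ρ v z ∈ radSeries ρ (s + 1) :=
  fun _ hz => map_radSeries_le ρ v s (Submodule.mem_map_of_mem hz)

/-- The map from each radical layer to the next induced by the operator `ρ v`, as a linear function
of `v`. -/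
def radLayerMap (s : ℕ) : V →ₗ[k] RadLayer ρ s →ₗ[k] RadLayer ρ (s + 1) where
  toFun v := Submodule.mapQ _ _ ((ρ v).restrict (mapsTo_radSeries ρ v s)) fun z hz =>
    mapsTo_radSeries ρ v (s + 1) z hz
  map_add' v w := by
    ext z
    simp only [map_add]
    rfl
  map_smul' t v := by
    ext z
    simp only [map_smul]
    rfl

variable {ρ}

theorem nontrivial_radLayer {s : ℕ} (h : radSeries ρ (s + 1) < radSeries ρ s) :
    Nontrivial (RadLayer ρ s) := by
  rw [Submodule.Quotient.nontrivial_iff, Ne, Submodule.submoduleOf_eq_top]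
  exact h.not_ge

theorem radLayerMap_surjective {v : V} {s : ℕ}
    (h : (radSeries ρ s).map (ρ v) = radSeries ρ (s + 1)) :
    Function.Surjective (radLayerMap ρ s v) := by
  rintro ⟨y, hy⟩
  obtain ⟨z, hz, rfl⟩ := h.symm ▸ hy
  exact ⟨Submodule.Quotient.mk ⟨z, hz⟩, rfl⟩

end RadicalLayers

section LayerDimensions

variable {k V M : Type*} [Field k] [AddCommGroup V] [Module k V] [AddCommGroup M] [Module k M]
  [FiniteDimensional k M]

theorem finrank_radLayer (ρ : V →ₗ[k] Module.End k M) (s : ℕ) :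
    finrank k (RadLayer ρ s) = finrank k (radSeries ρ s) - finrank k (radSeries ρ (s + 1)) := by
  rw [Submodule.finrank_quotient,
    (Submodule.submoduleOfEquivOfLe (radSeries_succ_le ρ s)).finrank_eq]

theorem finrank_radLayer_succ_lt [IsAlgClosed k] {ρ : V →ₗ[k] Module.End k M}
    (hV : 1 < Module.rank k V) {s : ℕ} (hlt : radSeries ρ (s + 1) < radSeries ρ s)
    (hmap : ∀ v ≠ 0, (radSeries ρ s).map (ρ v) = radSeries ρ (s + 1)) :
    finrank k (RadLayer ρ (s + 1)) < finrank k (RadLayer ρ s) :=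
  have : Nontrivial (RadLayer ρ s) := nontrivial_radLayer hlt
  finrank_lt_finrank_of_forall_surjective hV (radLayerMap ρ s) fun v hv =>
    radLayerMap_surjective (hmap v hv)

end LayerDimensions

namespace HasEqualImages

section Radical

variable {k V M : Type*} [Field k] [Infinite k] [AddCommGroup V] [Module k V] [AddCommGroup M]
  [Module k M] {ρ : V →ₗ[k] Module.End k M} {j : ℕ}

theorem radSeries_eq_range_pow_self (h : HasEqualImages ρ j) (hcomm : ∀ v w, Commute (ρ v) (ρ w))
    (hj : 0 < j) (hfact : (j.factorial : k) ≠ 0) {v : V} (hv : v ≠ 0) :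
    radSeries ρ j = LinearMap.range (ρ v ^ j) := by
  refine le_antisymm ?_ (range_pow_le_radSeries ρ v j)
  rw [radSeries_eq_iSup_range_pow hcomm hfact]
  refine iSup_le fun w => ?_
  obtain rfl | hw := eq_or_ne w 0
  · simp [hj.ne']
  · exact (h w v hw hv).le

theorem map_radSeries (h : HasEqualImages ρ j) (hcomm : ∀ v w, Commute (ρ v) (ρ w)) (hj : 0 < j)
    (hfact : (j.factorial : k) ≠ 0) {v : V} (hv : v ≠ 0) {s : ℕ} (hs : j ≤ s + 1) :
    (radSeries ρ s).map (ρ v) = radSeries ρ (s + 1) := by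
  obtain ⟨i, rfl⟩ := Nat.exists_eq_add_one.2 hj
  induction s, Nat.le_of_succ_le_succ hs using Nat.le_induction with
  | base =>
    refine (map_radSeries_le ρ v i).antisymm ?_
    rw [h.radSeries_eq_range_pow_self hcomm hj hfact hv, range_pow_succ]
    exact Submodule.map_mono (range_pow_le_radSeries ρ v i)
  | succ s his ih => exact map_radSeries_succ hcomm (ih (by omega))

theorem radSeries_eq_range_pow (h : HasEqualImages ρ j) (hcomm : ∀ v w, Commute (ρ v) (ρ w))
    (hj : 0 < j) (hfact : (j.factorial : k) ≠ 0) {v : V} (hv : v ≠ 0) {s : ℕ} (hs : j ≤ s) :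
    radSeries ρ s = LinearMap.range (ρ v ^ s) := by
  induction s, hs using Nat.le_induction with
  | base => exact h.radSeries_eq_range_pow_self hcomm hj hfact hv
  | succ s hs ih =>
    rw [← h.map_radSeries hcomm hj hfact hv (by omega), ih, range_pow_succ]

theorem radSeries_eq_bot (h : HasEqualImages ρ j) (hcomm : ∀ v w, Commute (ρ v) (ρ w))
    (hj : 0 < j) (hfact : (j.factorial : k) ≠ 0) {n : ℕ} (hjn : j ≤ n)
    (hnil : ∀ v, ρ v ^ n = 0) : radSeries ρ n = ⊥ := by
  obtain hV | hV := subsingleton_or_nontrivial V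
  · obtain ⟨m, rfl⟩ := Nat.exists_eq_add_one.2 (hj.trans_le hjn)
    refine eq_bot_iff.2 (iSup_le fun v => ?_)
    rw [Subsingleton.elim v 0, map_zero, Submodule.map_zero]
  · obtain ⟨v, hv⟩ := exists_ne (0 : V)
    rw [h.radSeries_eq_range_pow hcomm hj hfact hv hjn, hnil, LinearMap.range_zero]

end Radical

theorem jordanMult_succ {k M : Type} {V : Type*} [Field k] [Infinite k] [AddCommGroup V]
    [Module k V] [AddCommGroup M] [Module k M] [FiniteDimensional k M]
    {ρ : V →ₗ[k] Module.End k M} {j : ℕ} (h : HasEqualImages ρ j)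
    (hcomm : ∀ v w, Commute (ρ v) (ρ w)) (hj : 0 < j) (hfact : (j.factorial : k) ≠ 0) {v : V}
    (hv : v ≠ 0) {s : ℕ} (hs : j ≤ s) :
    jordanMult (ρ v) (s + 1) = finrank k (RadLayer ρ s) - finrank k (RadLayer ρ (s + 1)) := by
  have hker {t : ℕ} (ht : j ≤ t) :
      finrank k ↥(LinearMap.ker (ρ v) ⊓ LinearMap.range (ρ v ^ t)) = finrank k (RadLayer ρ t) := by
    rw [← h.radSeries_eq_range_pow hcomm hj hfact hv ht, finrank_radLayer,
      ← h.map_radSeries hcomm hj hfact hv (by omega),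
      ← finrank_map_add_finrank_ker_inf (ρ v) (radSeries ρ t), Nat.add_sub_cancel_left]
  rw [jordanMult, Nat.add_sub_cancel, hker hs, hker (by omega)]

end HasEqualImages

section RestRep

variable {p : ℕ} {k L M : Type} [Field k] [LieRing L] [LieAlgebra k L] {P : pStructure p k L}
  [AddCommGroup M] [Module k M] (R : RestRep P M)

theorem RestRep.commute (hab : ∀ x y : L, ⁅x, y⁆ = 0) (x y : L) : Commute (R.ρ x) (R.ρ y) := by
  have h := R.map_bracket x y
  rw [hab, map_zero] at h
  exact sub_eq_zero.1 h.symm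

theorem RestRep.pow_eq_zero (htriv : ∀ x : L, P.pmap x = 0) (x : L) : R.ρ x ^ p = 0 := by
  rw [← R.map_pmap, htriv, map_zero]

theorem RestRep.radPow_eq_radSeries : R.radPow = radSeries R.ρ := by
  funext s
  induction s with
  | zero => rfl
  | succ s ih => rw [radPow, ih, radSeries]

theorem RestRep.loewy_eq_loewyLength : R.loewy = loewyLength R.ρ := by
  rw [RestRep.loewy, R.radPow_eq_radSeries, loewyLength]

end RestRep

end ElemAb

theorem statement18_general {k M : Type} {V : Type*} [Field k] [IsAlgClosed k]
    [AddCommGroup V] [Module k V] [AddCommGroup M] [Module k M] [FiniteDimensional k M]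
    {ρ : V →ₗ[k] Module.End k M} (hcomm : ∀ v w, Commute (ρ v) (ρ w))
    {j n : ℕ} (hj : 0 < j) (hfact : (j.factorial : k) ≠ 0) (hjn : j ≤ n)
    (hnil : ∀ v, ρ v ^ n = 0) (h : HasEqualImages ρ j) :
    (∀ v w, v ≠ 0 → w ≠ 0 →
      (radSeries ρ (j - 1)).map (ρ v) = (radSeries ρ (j - 1)).map (ρ w)) ∧
    (∀ ℓ, j ≤ ℓ → HasEqualImages ρ ℓ) ∧
    radSeries ρ n = ⊥ ∧
    (1 < Module.rank k V → ∃ c : ℕ → ℕ,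
      (∀ i, j + 1 ≤ i → i ≤ loewyLength ρ → 0 < c i) ∧
      ∀ v, v ≠ 0 → ∀ i, j + 1 ≤ i → jordanMult (ρ v) i = c i) := by
  have : Infinite k := IsAlgClosed.instInfinite
  have hbot : radSeries ρ n = ⊥ := h.radSeries_eq_bot hcomm hj hfact hjn hnil
  have hmap {s : ℕ} (hs : j ≤ s + 1) (v : V) (hv : v ≠ 0) :
      (radSeries ρ s).map (ρ v) = radSeries ρ (s + 1) := h.map_radSeries hcomm hj hfact hv hs
  have hpow {ℓ : ℕ} (hℓ : j ≤ ℓ) {v : V} (hv : v ≠ 0) : radSeries ρ ℓ = LinearMap.range (ρ v ^ ℓ) :=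
    h.radSeries_eq_range_pow hcomm hj hfact hv hℓ
  refine ⟨fun v w hv hw => (hmap (by omega) v hv).trans (hmap (by omega) w hw).symm,
    fun ℓ hℓ v w hv hw => (hpow hℓ hv).symm.trans (hpow hℓ hw), hbot, fun hV => ?_⟩
  let c (i : ℕ) : ℕ := Module.finrank k (RadLayer ρ (i - 1)) - Module.finrank k (RadLayer ρ i)
  refine ⟨c, fun i hi hiℓ => ?_, fun v hv i hi => ?_⟩ <;>
    obtain ⟨s, rfl⟩ := Nat.exists_eq_add_one.2 (Nat.zero_lt_of_lt hi)
  · have hne : radSeries ρ s ≠ ⊥ := Nat.notMem_of_lt_sInf (s := {s | radSeries ρ s = ⊥}) hiℓ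
    exact Nat.sub_pos_of_lt <| finrank_radLayer_succ_lt hV (radSeries_succ_lt hbot hne)
      (hmap (by omega))
  · exact h.jordanMult_succ hcomm hj hfact hv (by omega)

/-- Properties of `U₀(e_r)`-modules with the equal `j`-images property over
the `r`-dimensional elementary abelian restricted Lie algebra `e_r`. -/
theorem statement18
    (p : ℕ) (hp : p.Prime) (hp3 : 3 ≤ p)
    (k : Type) [Field k] [IsAlgClosed k] [CharP k p]
    (r : ℕ)
    (L : Type) [LieRing L] [LieAlgebra k L] [FiniteDimensional k L]
    (P : pStructure p k L)
    -- `L = e_r` is the `r`-dimensional elementary abelian restricted Lie algebra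
    (hdim : Module.finrank k L = r)
    (hab : ∀ x y : L, ⁅x, y⁆ = (0 : L)) (htriv : ∀ x : L, P.pmap x = 0)
    (j : ℕ) (hj1 : 1 ≤ j) (hjp : j ≤ p - 1)
    (M : Type) [AddCommGroup M] [Module k M] [FiniteDimensional k M]
    (R : RestRep P M)
    -- `M` has the equal `j`-images property
    (heqi : ∀ x y : L, x ≠ 0 → y ≠ 0 →
      LinearMap.range ((R.ρ x) ^ j) = LinearMap.range ((R.ρ y) ^ j)) :
    -- (1) `Rad^{j-1}(M)` has the equal images property
    (∀ x y : L, x ≠ 0 → y ≠ 0 →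
      Submodule.map (R.ρ x) (R.radPow (j - 1)) = Submodule.map (R.ρ y) (R.radPow (j - 1))) ∧
    -- (2) `M` has the equal `ℓ`-images property for all `ℓ ∈ {j, …, p-1}`
    (∀ ℓ : ℕ, j ≤ ℓ → ℓ ≤ p - 1 → ∀ x y : L, x ≠ 0 → y ≠ 0 →
      LinearMap.range ((R.ρ x) ^ ℓ) = LinearMap.range ((R.ρ y) ^ ℓ)) ∧
    -- (3) the Loewy length of `M` is at most `p`
    (R.radPow p = ⊥) ∧
    -- (4) uniform Jordan block multiplicities `c_i` in degrees `i > j`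
    (2 ≤ r → ∃ c : ℕ → ℕ,
      (∀ i : ℕ, j + 1 ≤ i → i ≤ R.loewy → 0 < c i) ∧
      ∀ x : L, x ≠ 0 → ∀ i : ℕ, j + 1 ≤ i → i ≤ R.loewy →
        jordanMult (R.ρ x) i = c i) := by
  have hfact : (j.factorial : k) ≠ 0 := by
    rw [Ne, CharP.cast_eq_zero_iff k p, hp.dvd_factorial]
    omega
  obtain ⟨himages, hpowers, hbot, hjordan⟩ := statement18_general (R.commute hab) hj1 hfact
    (hjp.trans (p.sub_le 1)) (R.pow_eq_zero htriv) heqi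
  rw [R.radPow_eq_radSeries, R.loewy_eq_loewyLength]
  refine ⟨himages, fun ℓ hℓ _ => hpowers ℓ hℓ, hbot, fun hr => ?_⟩
  obtain ⟨c, hpos, hc⟩ := hjordan (Module.one_lt_rank_of_one_lt_finrank (hdim ▸ hr))
  exact ⟨c, hpos, fun x hx i hi _ => hc x hx i hi⟩
end
end
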